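/- Let Δ ≥ 3 be an integer, b ∈ (0,1), and η > 0. Let G = (V,E) be a graph with n = |V| vertices and maximum degree at most Δ, and let μ be a Gibbs distribution of a q-spin system on G that is totally-connected, b-marginally bounded, and η-spectrally independent. If n ≥ (24Δ/b²)·(4η/b² + 1), then the Glauber dynamics for μ satisfies the modified log-Sobolev inequality with constant 1/(C₁·n), where C₁ = (18·log(1/b)/b⁴)·(24Δ/b²)^{4η/b²+1}. -/

import Mathlib

/-!
For `Λ ⊆ V` let `f_Λ = E_μ[f | σ_Λ]` and `F(Λ) = E_μ[f_Λ log f_Λ]` (`cE`, `entF`), so that the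
entropy of `f` is `F(V) - F(∅)` and the expected conditional entropy of a block `S`, given the spins
outside it, is `F(V) - F(V \ S)`. The proof resamples large random blocks first, and then splits
these into small connected pieces.

*From spectral independence to block factorization.* The inequality `a log (a / c) ≥ a - c` gives
`F(Λuv) - F(Λu) - F(Λv) + F(Λ) ≥ -E[Cov(f_{Λu}, f_{Λv} | σ_Λ) / f_Λ]` (`entF_supermod`). The sum
of these covariances over `u, v` is a quadratic form of the influence matrix, at most `η` times the
sum of the conditional variances of the `f_{Λv}` (`sum_cov_le`). Marginal boundedness makes
`f_{Λv} / f_Λ ≤ 1 / b`, so the `χ²` terms are at most a constant times the entropy increments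
`F(Λv) - F(Λ)`. Hence the sum of the second differences of `F` at `Λ` is at least `-K` times the sum
of the first differences, `K = 4η / b²` (`second_diff_ge`). Averaged over all `Λ` of given size this
is a recursion, which bounds the entropy of `f` by `(2 / θ)^(K + 1)` times the expected conditional
entropy of a uniformly random block of size `l ≥ θ n` (`block_factorization`).

*From blocks to single sites.* Take `θ = b² / (12Δ)`. By the Markov property the components of
the graph induced on the block are conditionally independent given the outside, so the entropy of
the block is at most the sum of the entropies of the components (`entF_comp_le`). On a block of
size `k` a crude path argument, based on total connectedness, bounds the entropy by the local
Dirichlet form of `√f`, with a constant of order `k b^(-2k)` (`block_ent_le`). The component of a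
vertex in a random block equals a given `U` with probability at most `(4Δl / n)^|U| ≤ (b² / 2)^|U|`
times the probability that `U` is a percolation cluster at parameter `1 / (2Δ)` (`sum_comp_le`), so
the exponential constants are averaged to a bounded one.

The Dirichlet form of `√f` is at most that of `(f, log f)`. If `b > 1/2`, the dynamics cannot
move, and total connectedness forces the entropy to vanish.
-/

open Finset

attribute [local instance] Classical.propDecidable

noncomputable section

variable {V : Type} [Fintype V] [DecidableEq V] {q : ℕ}

/-- Probability that a sample from `μ` agrees with `τ` on `Λ`. -/
def prAgree (μ : (V → Fin q) → ℝ) (Λ : Finset V) (τ : V → Fin q) : ℝ :=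
  ∑ σ : V → Fin q, if ∀ v ∈ Λ, σ v = τ v then μ σ else 0

/-- Conditional probability that `σ v = i` given that `σ` agrees with `τ` on `Λ`. -/
def condProb (μ : (V → Fin q) → ℝ) (Λ : Finset V) (τ : V → Fin q) (v : V) (i : Fin q) : ℝ :=
  prAgree μ (insert v Λ) (Function.update τ v i) / prAgree μ Λ τ

/-- `μ` is `b`-marginally bounded: conditioned on any feasible boundary condition on a
proper subset `Λ` of the vertices, every feasible spin at any unassigned vertex has
conditional probability at least `b`. -/
def MarginallyBounded (μ : (V → Fin q) → ℝ) (b : ℝ) : Prop :=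
  ∀ Λ : Finset V, Λ ≠ Finset.univ → ∀ τ : V → Fin q, 0 < prAgree μ Λ τ →
    ∀ v ∉ Λ, ∀ i : Fin q, 0 < condProb μ Λ τ v i → b ≤ condProb μ Λ τ v i

/-- The index set of the influence matrix: pairs `(u,i)` with `u` unassigned and
spin `i` feasible at `u` given the boundary condition. -/
abbrev InfIdx (μ : (V → Fin q) → ℝ) (Λ : Finset V) (τ : V → Fin q) : Type :=
  {p : V × Fin q // p.1 ∉ Λ ∧ 0 < condProb μ Λ τ p.1 p.2}

/-- The influence matrix `Ψ^τ`. -/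
def inflMatrix (μ : (V → Fin q) → ℝ) (Λ : Finset V) (τ : V → Fin q) :
    Matrix (InfIdx μ Λ τ) (InfIdx μ Λ τ) ℝ :=
  Matrix.of fun p r =>
    if p.1.1 = r.1.1 then 0
    else condProb μ (insert p.1.1 Λ) (Function.update τ p.1.1 p.1.2) r.1.1 r.1.2
      - condProb μ Λ τ r.1.1 r.1.2

/-- `μ` is `η`-spectrally independent: every real eigenvalue of every influence matrix
`Ψ^τ` is at most `η`. -/
def SpectrallyIndependent (μ : (V → Fin q) → ℝ) (η : ℝ) : Prop :=
  ∀ Λ : Finset V, Λ ≠ Finset.univ → ∀ τ : V → Fin q, 0 < prAgree μ Λ τ →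
    ∀ (t : ℝ) (x : InfIdx μ Λ τ → ℝ), x ≠ 0 →
      (inflMatrix μ Λ τ).mulVec x = t • x → t ≤ η

/-- Two configurations are adjacent in the Hamming graph iff they differ at exactly one
vertex. -/
def HammingAdj (σ σ' : V → Fin q) : Prop := ∃! v : V, σ v ≠ σ' v

/-- `μ` is totally-connected: for every nonempty `S ⊆ V` and feasible boundary condition
`τ` on `V∖S`, the set of feasible configurations given `τ` is connected in the Hamming
graph (moving only through feasible configurations). -/
def TotallyConnected (μ : (V → Fin q) → ℝ) : Prop :=
  ∀ S : Finset V, S.Nonempty → ∀ τ : V → Fin q, 0 < prAgree μ Sᶜ τ →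
    ∀ σ σ' : V → Fin q,
      0 < μ σ → (∀ v ∈ Sᶜ, σ v = τ v) →
      0 < μ σ' → (∀ v ∈ Sᶜ, σ' v = τ v) →
      Relation.ReflTransGen
        (fun a b => HammingAdj a b ∧ 0 < μ b ∧ ∀ v ∈ Sᶜ, b v = τ v) σ σ'

/-- Expectation of `f` under `π`. -/
def expec (π f : (V → Fin q) → ℝ) : ℝ := ∑ σ, π σ * f σ

/-- Entropy `Ent_π(f) = π(f·log(f/π(f)))` (with the conventions `0·log 0 = 0` and
`log 0 = 0`, so that the entropy vanishes when `π(f) = 0`). -/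
def entropy (π f : (V → Fin q) → ℝ) : ℝ :=
  ∑ σ, π σ * f σ * Real.log (f σ / expec π f)

/-- Conditional distribution `μ_S^τ` on configurations agreeing with `τ` outside `S`. -/
def condDist (μ : (V → Fin q) → ℝ) (S : Finset V) (τ : V → Fin q) : (V → Fin q) → ℝ :=
  fun σ => (if ∀ v ∈ Sᶜ, σ v = τ v then μ σ else 0) / prAgree μ Sᶜ τ

/-- `μ[Ent_S(f)]`: the average over the boundary condition (distributed according to `μ`)
of the conditional entropy of `f` on `S`. -/
def avgEnt (μ : (V → Fin q) → ℝ) (S : Finset V) (f : (V → Fin q) → ℝ) : ℝ :=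
  ∑ τ : V → Fin q, μ τ * entropy (condDist μ S τ) f

/-- `μ` satisfies approximate tensorization of entropy with constant `C₁`. -/
def ApproxTensorization (μ : (V → Fin q) → ℝ) (C₁ : ℝ) : Prop :=
  ∀ f : (V → Fin q) → ℝ, (∀ σ, 0 ≤ f σ) →
    entropy μ f ≤ C₁ * ∑ v : V, avgEnt μ {v} f

/-- `μ` satisfies `ℓ`-uniform block factorization of entropy with constant `C`. -/
def UniformBlockFactorization (μ : (V → Fin q) → ℝ) (ℓ : ℕ) (C : ℝ) : Prop :=
  ∀ f : (V → Fin q) → ℝ, (∀ σ, 0 ≤ f σ) →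
    ((ℓ : ℝ) / (Fintype.card V : ℝ)) * entropy μ f ≤
      C * ((Fintype.card V).choose ℓ : ℝ)⁻¹ *
        ∑ S ∈ Finset.powersetCard ℓ (Finset.univ : Finset V), avgEnt μ S f

/-- `μ` is a probability distribution. -/
def IsProbDist (μ : (V → Fin q) → ℝ) : Prop := (∀ σ, 0 ≤ μ σ) ∧ ∑ σ, μ σ = 1

/-- Unnormalized Gibbs weight of a `q`-spin system with symmetric interaction matrix `A`
and external field `h`. -/
def gibbsWeight (G : SimpleGraph V) [DecidableRel G.Adj]
    (A : Fin q → Fin q → ℝ) (hA : ∀ i j, A i j = A j i) (h : Fin q → ℝ)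
    (σ : V → Fin q) : ℝ :=
  (∏ e ∈ G.edgeFinset,
      Sym2.lift ⟨fun u v => A (σ u) (σ v), fun u v => hA (σ u) (σ v)⟩ e) *
    ∏ v : V, h (σ v)

/-- The Glauber dynamics transition matrix for `μ`. -/
def glauberMatrix (μ : (V → Fin q) → ℝ) : Matrix (V → Fin q) (V → Fin q) ℝ :=
  Matrix.of fun σ σ' =>
    (Fintype.card V : ℝ)⁻¹ *
      ∑ v : V, if ∀ u, u ≠ v → σ' u = σ u then
        μ σ' / ∑ j : Fin q, μ (Function.update σ v j) else 0

/-- Dirichlet form of the Glauber dynamics. -/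
def glauberDirichlet (μ : (V → Fin q) → ℝ) (f g : (V → Fin q) → ℝ) : ℝ :=
  (1 / 2) * ∑ σ, ∑ σ', μ σ * glauberMatrix μ σ σ' * (f σ - f σ') * (g σ - g σ')

/-- Kullback–Leibler divergence. -/
def klDiv (ν μ : (V → Fin q) → ℝ) : ℝ := ∑ σ, ν σ * Real.log (ν σ / μ σ)

end

/-! ### Conditional expectations and the entropy functional -/

section CondExp

variable {V : Type} [Fintype V] [DecidableEq V] {q : ℕ}

/-- Indicator that `σ` agrees with `τ` on `Λ`. -/
noncomputable def ind (Λ : Finset V) (τ σ : V → Fin q) : ℝ :=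
  if ∀ v ∈ Λ, σ v = τ v then 1 else 0

/-- Conditional expectation `E_μ[f | σ_Λ = τ_Λ]`, a function of the boundary condition `τ`.
It is `0` when `τ` is infeasible on `Λ`. -/
noncomputable def cE (μ : (V → Fin q) → ℝ) (Λ : Finset V) (f : (V → Fin q) → ℝ)
    (τ : V → Fin q) : ℝ :=
  (∑ σ, μ σ * f σ * ind Λ τ σ) / prAgree μ Λ τ

/-- `g` depends only on the spins in `Λ`. -/
def DepOn (Λ : Finset V) (g : (V → Fin q) → ℝ) : Prop :=
  ∀ σ τ : V → Fin q, (∀ v ∈ Λ, σ v = τ v) → g σ = g τ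

lemma prAgree_eq (μ : (V → Fin q) → ℝ) (Λ : Finset V) (τ : V → Fin q) :
    prAgree μ Λ τ = ∑ σ, μ σ * ind Λ τ σ := by
  unfold prAgree ind
  refine sum_congr rfl fun σ _ => ?_
  split_ifs <;> simp

lemma ind_nonneg (Λ : Finset V) (τ σ : V → Fin q) : 0 ≤ ind Λ τ σ := by
  unfold ind; split_ifs <;> norm_num

lemma ind_le_one (Λ : Finset V) (τ σ : V → Fin q) : ind Λ τ σ ≤ 1 := by
  unfold ind; split_ifs <;> norm_num

lemma ind_self (Λ : Finset V) (τ : V → Fin q) : ind Λ τ τ = 1 := by simp [ind]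

lemma ind_symm (Λ : Finset V) (τ σ : V → Fin q) : ind Λ τ σ = ind Λ σ τ := by
  unfold ind
  congr 1
  exact propext ⟨fun h v hv => (h v hv).symm, fun h v hv => (h v hv).symm⟩

lemma ind_congr {Λ : Finset V} {τ τ' : V → Fin q} (h : ∀ v ∈ Λ, τ v = τ' v) (σ : V → Fin q) :
    ind Λ τ σ = ind Λ τ' σ := by
  unfold ind
  congr 1
  refine propext ⟨fun h' v hv => (h' v hv).trans (h v hv),
    fun h' v hv => (h' v hv).trans (h v hv).symm⟩

lemma depOn_ind {Λ Λ' : Finset V} (h : Λ ⊆ Λ') (τ : V → Fin q) : DepOn Λ' (ind Λ τ) := by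
  intro σ σ' hσ
  rw [ind_symm, ind_symm Λ τ σ']
  exact ind_congr (fun v hv => hσ v (h hv)) τ

lemma depOn_mono {Λ Λ' : Finset V} (h : Λ ⊆ Λ') {g : (V → Fin q) → ℝ} (hg : DepOn Λ g) :
    DepOn Λ' g := fun σ τ hs => hg σ τ fun v hv => hs v (h hv)

lemma depOn_prAgree (μ : (V → Fin q) → ℝ) (Λ : Finset V) : DepOn Λ (prAgree μ Λ) := by
  intro σ τ h
  simp only [prAgree_eq, ind_congr h]

lemma depOn_cE (μ : (V → Fin q) → ℝ) (Λ : Finset V) (f : (V → Fin q) → ℝ) :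
    DepOn Λ (cE μ Λ f) := by
  intro σ τ h
  simp only [cE, ind_congr h, depOn_prAgree μ Λ σ τ h]

lemma ind_anti {Λ Λ' : Finset V} (h : Λ ⊆ Λ') (τ σ : V → Fin q) : ind Λ' τ σ ≤ ind Λ τ σ := by
  unfold ind
  split_ifs with h1 h2 h2
  · exact le_rfl
  · exact absurd (fun v hv => h1 v (h hv)) h2
  · norm_num
  · exact le_rfl

lemma prAgree_nonneg {μ : (V → Fin q) → ℝ} (hμ : ∀ σ, 0 ≤ μ σ) (Λ : Finset V)
    (τ : V → Fin q) : 0 ≤ prAgree μ Λ τ := by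
  rw [prAgree_eq]
  exact sum_nonneg fun σ _ => mul_nonneg (hμ σ) (ind_nonneg _ _ _)

lemma le_prAgree {μ : (V → Fin q) → ℝ} (hμ : ∀ σ, 0 ≤ μ σ) (Λ : Finset V)
    (τ : V → Fin q) : μ τ ≤ prAgree μ Λ τ := by
  rw [prAgree_eq]
  have := single_le_sum (f := fun σ => μ σ * ind Λ τ σ)
    (fun σ _ => mul_nonneg (hμ σ) (ind_nonneg _ _ _)) (mem_univ τ)
  simpa [ind_self] using this

lemma prAgree_anti {μ : (V → Fin q) → ℝ} (hμ : ∀ σ, 0 ≤ μ σ) {Λ Λ' : Finset V} (h : Λ ⊆ Λ')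
    (τ : V → Fin q) : prAgree μ Λ' τ ≤ prAgree μ Λ τ := by
  rw [prAgree_eq, prAgree_eq]
  exact sum_le_sum fun σ _ => mul_le_mul_of_nonneg_left (ind_anti h τ σ) (hμ σ)

lemma sum_ind_univ (g : (V → Fin q) → ℝ) (τ : V → Fin q) :
    ∑ σ, g σ * ind Finset.univ τ σ = g τ := by
  rw [sum_eq_single τ]
  · simp [ind_self]
  · intro σ _ hne
    have : ind Finset.univ τ σ = 0 := by
      unfold ind
      rw [if_neg]
      intro h
      exact hne (funext fun v => h v (mem_univ v))
    rw [this, mul_zero]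
  · simp

lemma prAgree_univ (μ : (V → Fin q) → ℝ) (τ : V → Fin q) : prAgree μ Finset.univ τ = μ τ := by
  rw [prAgree_eq, sum_ind_univ]

lemma cE_univ (μ f : (V → Fin q) → ℝ) (τ : V → Fin q) (h : 0 < μ τ) :
    cE μ Finset.univ f τ = f τ := by
  rw [cE, prAgree_univ, sum_ind_univ (fun σ => μ σ * f σ)]
  field_simp

lemma cE_empty {μ : (V → Fin q) → ℝ} (h1 : ∑ σ, μ σ = 1) (f : (V → Fin q) → ℝ)
    (τ : V → Fin q) : cE μ ∅ f τ = ∑ σ, μ σ * f σ := by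
  simp [cE, prAgree_eq, ind, h1]

/-- The conditional expectation is self-adjoint against functions of the conditioning. -/
lemma sum_cE_mul {μ : (V → Fin q) → ℝ} (hμ : ∀ σ, 0 ≤ μ σ) (Λ : Finset V)
    (f : (V → Fin q) → ℝ) {g : (V → Fin q) → ℝ} (hg : DepOn Λ g) :
    ∑ σ, μ σ * (cE μ Λ f σ * g σ) = ∑ σ, μ σ * (f σ * g σ) := by
  have key : ∀ σ, μ σ * (cE μ Λ f σ * g σ) =
      ∑ ρ, μ ρ * f ρ * (μ σ * ind Λ ρ σ * (g ρ / prAgree μ Λ ρ)) := by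
    intro σ
    rw [cE, div_mul_eq_mul_div, sum_mul, sum_div, mul_sum]
    refine sum_congr rfl fun ρ _ => ?_
    by_cases h : ∀ v ∈ Λ, ρ v = σ v
    · rw [hg ρ σ h, depOn_prAgree μ Λ ρ σ h, ind_symm Λ ρ σ]
      ring
    · have : ind Λ σ ρ = 0 := by unfold ind; rw [if_neg h]
      rw [ind_symm Λ ρ σ, this]; ring
  simp_rw [key]
  rw [sum_comm]
  refine sum_congr rfl fun ρ _ => ?_
  rw [← mul_sum, ← sum_mul, ← prAgree_eq]
  rcases (hμ ρ).eq_or_lt with h0 | h0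
  · rw [← h0]; ring
  · have : 0 < prAgree μ Λ ρ := h0.trans_le (le_prAgree hμ Λ ρ)
    field_simp

lemma sum_cE {μ : (V → Fin q) → ℝ} (hμ : ∀ σ, 0 ≤ μ σ) (Λ : Finset V)
    (f : (V → Fin q) → ℝ) : ∑ σ, μ σ * cE μ Λ f σ = ∑ σ, μ σ * f σ := by
  have := sum_cE_mul hμ Λ f (g := fun _ => 1) (fun _ _ _ => rfl)
  simpa using this

lemma cE_tower {μ : (V → Fin q) → ℝ} (hμ : ∀ σ, 0 ≤ μ σ) {Λ Λ' : Finset V} (h : Λ ⊆ Λ')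
    (f : (V → Fin q) → ℝ) (τ : V → Fin q) : cE μ Λ (cE μ Λ' f) τ = cE μ Λ f τ := by
  have := sum_cE_mul hμ Λ' f (depOn_ind h τ)
  simp only [← mul_assoc] at this
  rw [cE, this, cE]

lemma cE_sub (μ : (V → Fin q) → ℝ) (Λ : Finset V) (f g : (V → Fin q) → ℝ) (τ : V → Fin q) :
    cE μ Λ (fun σ => f σ - g σ) τ = cE μ Λ f τ - cE μ Λ g τ := by
  simp only [cE]
  rw [← sub_div, ← sum_sub_distrib]
  congr 1
  exact sum_congr rfl fun σ _ => by ring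

lemma cE_sum {ι : Type*} (μ : (V → Fin q) → ℝ) (Λ : Finset V) (s : Finset ι)
    (f : ι → (V → Fin q) → ℝ) (τ : V → Fin q) :
    cE μ Λ (fun σ => ∑ i ∈ s, f i σ) τ = ∑ i ∈ s, cE μ Λ (f i) τ := by
  simp only [cE]
  rw [← sum_div, sum_comm]
  congr 1
  exact sum_congr rfl fun σ _ => by rw [mul_sum, sum_mul]

/-- A factor depending only on the conditioning can be pulled out. -/
lemma cE_mul_dep (μ : (V → Fin q) → ℝ) (Λ : Finset V) (f : (V → Fin q) → ℝ)
    {g : (V → Fin q) → ℝ} (hg : DepOn Λ g) (τ : V → Fin q) :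
    cE μ Λ (fun σ => f σ * g σ) τ = cE μ Λ f τ * g τ := by
  simp only [cE]
  rw [div_mul_eq_mul_div, sum_mul]
  congr 1
  refine sum_congr rfl fun σ _ => ?_
  by_cases h : ∀ v ∈ Λ, σ v = τ v
  · rw [hg σ τ h]; ring
  · have : ind Λ τ σ = 0 := by unfold ind; rw [if_neg h]
    rw [this]; ring

lemma cE_dep {μ : (V → Fin q) → ℝ} (Λ : Finset V)
    {g : (V → Fin q) → ℝ} (hg : DepOn Λ g) (τ : V → Fin q) (hτ : 0 < prAgree μ Λ τ) :
    cE μ Λ g τ = g τ := by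
  have := cE_mul_dep μ Λ (fun _ => 1) hg τ
  simp only [one_mul] at this
  rw [this, cE]
  simp only [mul_one]
  rw [← prAgree_eq, div_self hτ.ne', one_mul]

lemma cE_pos {μ : (V → Fin q) → ℝ} (hμ : ∀ σ, 0 ≤ μ σ) (Λ : Finset V)
    {f : (V → Fin q) → ℝ} (hf : ∀ σ, 0 < f σ) (τ : V → Fin q) (hτ : 0 < μ τ) :
    0 < cE μ Λ f τ := by
  refine div_pos ?_ (hτ.trans_le (le_prAgree hμ Λ τ))
  refine sum_pos' (fun σ _ => mul_nonneg (mul_nonneg (hμ σ) (hf σ).le) (ind_nonneg _ _ _))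
    ⟨τ, mem_univ τ, ?_⟩
  rw [ind_self, mul_one]
  exact mul_pos hτ (hf τ)

lemma cE_mul_prAgree_anti {μ : (V → Fin q) → ℝ} (hμ : ∀ σ, 0 ≤ μ σ) {Λ Λ' : Finset V}
    (h : Λ ⊆ Λ') {f : (V → Fin q) → ℝ} (hf : ∀ σ, 0 ≤ f σ) (τ : V → Fin q) (hτ : 0 < μ τ) :
    cE μ Λ' f τ * prAgree μ Λ' τ ≤ cE μ Λ f τ * prAgree μ Λ τ := by
  have h1 := hτ.trans_le (le_prAgree hμ Λ τ)
  have h2 := hτ.trans_le (le_prAgree hμ Λ' τ)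
  rw [cE, cE, div_mul_cancel₀ _ h1.ne', div_mul_cancel₀ _ h2.ne']
  exact sum_le_sum fun σ _ =>
    mul_le_mul_of_nonneg_left (ind_anti h τ σ) (mul_nonneg (hμ σ) (hf σ))

/-- Chain rule for the marginal bound: pinning further vertices to feasible
spins keeps at least a factor `b` of the probability for each of them. -/
lemma prAgree_union_ge {μ : (V → Fin q) → ℝ} (hμ : ∀ σ, 0 ≤ μ σ) {b : ℝ} (hb0 : 0 < b)
    (hmb : MarginallyBounded μ b) (Λ : Finset V) (τ : V → Fin q) (hτ : 0 < μ τ)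
    (T : Finset V) (hT : Disjoint T Λ) :
    b ^ T.card * prAgree μ Λ τ ≤ prAgree μ (T ∪ Λ) τ := by
  induction T using Finset.induction_on with
  | empty => simp
  | insert v T hv ih =>
    rw [disjoint_insert_left] at hT
    have ih := ih hT.2
    have hv' : v ∉ T ∪ Λ := by simp [hv, hT.1]
    have hp : 0 < prAgree μ (T ∪ Λ) τ := hτ.trans_le (le_prAgree hμ _ τ)
    have hp' : 0 < prAgree μ (insert v (T ∪ Λ)) τ := hτ.trans_le (le_prAgree hμ _ τ)
    have hne : T ∪ Λ ≠ Finset.univ := fun h => hv' (h ▸ mem_univ v)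
    have h3 := hmb (T ∪ Λ) hne τ hp v hv' (τ v)
    rw [condProb, Function.update_eq_self] at h3
    have h4 := h3 (div_pos hp' hp)
    rw [le_div_iff₀ hp] at h4
    rw [card_insert_of_notMem hv, insert_union, pow_succ]
    calc b ^ T.card * b * prAgree μ Λ τ = b * (b ^ T.card * prAgree μ Λ τ) := by ring
      _ ≤ b * prAgree μ (T ∪ Λ) τ := mul_le_mul_of_nonneg_left ih hb0.le
      _ ≤ _ := h4

/-- The functional `F(Λ) = E[f_Λ log f_Λ]` with `f_Λ = E[f | σ_Λ]`; the entropies of the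
proof are differences of its values. -/
noncomputable def entF (μ f : (V → Fin q) → ℝ) (Λ : Finset V) : ℝ :=
  ∑ σ, μ σ * (cE μ Λ f σ * Real.log (cE μ Λ f σ))

lemma entF_eq {μ : (V → Fin q) → ℝ} (hμ : ∀ σ, 0 ≤ μ σ) (f : (V → Fin q) → ℝ)
    {Λ Z : Finset V} (h : Λ ⊆ Z) :
    entF μ f Λ = ∑ σ, μ σ * (cE μ Z f σ * Real.log (cE μ Λ f σ)) := by
  have hd : DepOn Λ (fun σ => Real.log (cE μ Λ f σ)) := fun σ τ hs => by
    simp only [depOn_cE μ Λ f σ τ hs]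
  rw [entF, sum_cE_mul hμ Λ f hd, sum_cE_mul hμ Z f (depOn_mono h hd)]

lemma mul_log_ge {a c : ℝ} (ha : 0 < a) (hc : 0 < c) :
    a - c ≤ a * (Real.log a - Real.log c) := by
  have h := Real.log_le_sub_one_of_pos (div_pos hc ha)
  rw [Real.log_div hc.ne' ha.ne'] at h
  have h2 := mul_le_mul_of_nonneg_left h ha.le
  have : a * (c / a - 1) = c - a := by field_simp
  nlinarith

/-- Almost-supermodularity of `F`: the defect is controlled by a covariance.
It follows from `a log (a / c) ≥ a - c` with `a = f_Z` and `c = f_X f_Y / f_Λ`. -/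
lemma entF_supermod {μ : (V → Fin q) → ℝ} (hμ : ∀ σ, 0 ≤ μ σ) {f : (V → Fin q) → ℝ}
    (hf : ∀ σ, 0 < f σ) {Λ X Y Z : Finset V} (hΛX : Λ ⊆ X) (hXZ : X ⊆ Z)
    (hYZ : Y ⊆ Z) :
    -(∑ σ, μ σ * ((cE μ X f σ - cE μ Λ f σ) * (cE μ Y f σ - cE μ Λ f σ) / cE μ Λ f σ)) ≤
      entF μ f Z - entF μ f X - entF μ f Y + entF μ f Λ := by
  have e1 : -(∑ σ, μ σ * ((cE μ X f σ - cE μ Λ f σ) * (cE μ Y f σ - cE μ Λ f σ) / cE μ Λ f σ))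
      = ∑ σ, μ σ * (cE μ Z f σ - cE μ X f σ * cE μ Y f σ / cE μ Λ f σ) := by
    have h1 : ∑ σ, μ σ * ((cE μ X f σ - cE μ Λ f σ) * (cE μ Y f σ - cE μ Λ f σ) / cE μ Λ f σ)
        = ∑ σ, μ σ * (cE μ X f σ * cE μ Y f σ / cE μ Λ f σ) - ∑ σ, μ σ * cE μ X f σ
          - ∑ σ, μ σ * cE μ Y f σ + ∑ σ, μ σ * cE μ Λ f σ := by
      rw [← sum_sub_distrib, ← sum_sub_distrib, ← sum_add_distrib]
      refine sum_congr rfl fun σ _ => ?_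
      rcases (hμ σ).eq_or_lt with h0 | h0
      · rw [← h0]; ring
      · have := (cE_pos hμ Λ hf σ h0).ne'
        field_simp
        ring
    rw [h1]
    simp only [mul_sub, sum_sub_distrib]
    simp only [sum_cE hμ]
    ring
  have e2 : entF μ f Z - entF μ f X - entF μ f Y + entF μ f Λ =
      ∑ σ, μ σ * (cE μ Z f σ * (Real.log (cE μ Z f σ) -
        Real.log (cE μ X f σ * cE μ Y f σ / cE μ Λ f σ))) := by
    rw [entF_eq hμ f (subset_refl Z), entF_eq hμ f hXZ, entF_eq hμ f hYZ,
      entF_eq hμ f (hΛX.trans hXZ), ← sum_sub_distrib, ← sum_sub_distrib, ← sum_add_distrib]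
    refine sum_congr rfl fun σ _ => ?_
    rcases (hμ σ).eq_or_lt with h0 | h0
    · rw [← h0]; ring
    · have h1 := (cE_pos hμ Λ hf σ h0).ne'
      have h2 := (cE_pos hμ X hf σ h0).ne'
      have h3 := (cE_pos hμ Y hf σ h0).ne'
      rw [Real.log_div (mul_ne_zero h2 h3) h1, Real.log_mul h2 h3]
      ring
  rw [e1, e2]
  refine sum_le_sum fun σ _ => ?_
  rcases (hμ σ).eq_or_lt with h0 | h0
  · rw [← h0]; simp
  · exact mul_le_mul_of_nonneg_left (mul_log_ge (cE_pos hμ Z hf σ h0)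
      (div_pos (mul_pos (cE_pos hμ X hf σ h0) (cE_pos hμ Y hf σ h0)) (cE_pos hμ Λ hf σ h0)))
      h0.le

lemma entF_mono {μ : (V → Fin q) → ℝ} (hμ : ∀ σ, 0 ≤ μ σ) {f : (V → Fin q) → ℝ}
    (hf : ∀ σ, 0 < f σ) {Λ Z : Finset V} (h : Λ ⊆ Z) : entF μ f Λ ≤ entF μ f Z := by
  have := entF_supermod hμ hf (subset_refl Λ) h h
  simp at this
  linarith

lemma entropy_eq {μ : (V → Fin q) → ℝ} (hμ : ∀ σ, 0 ≤ μ σ) (h1 : ∑ σ, μ σ = 1)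
    {f : (V → Fin q) → ℝ} (hf : ∀ σ, 0 < f σ) :
    entropy μ f = entF μ f Finset.univ - entF μ f ∅ := by
  rw [entF_eq hμ f (subset_univ ∅), entF, ← sum_sub_distrib, entropy]
  refine sum_congr rfl fun σ _ => ?_
  rcases (hμ σ).eq_or_lt with h0 | h0
  · rw [← h0]; ring
  · have h2 := (cE_pos hμ ∅ hf σ h0).ne'
    have h3 : expec μ f = cE μ ∅ f σ := by rw [cE_empty h1, expec]
    rw [cE_univ μ f σ h0, h3, Real.log_div (hf σ).ne' h2]
    ring

end CondExp

/-! ### Spectral independence and covariances -/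

section Spectral

/-- If `Ψ` is reversible with respect to positive weights `w` and its real eigenvalues are at
most `η`, then its `w`-weighted quadratic form is at most `η` times the weighted norm: conjugating
by `√w` makes `Ψ` symmetric. -/
lemma quadForm_le_of_reversible {I : Type*} [Fintype I] [DecidableEq I] (w : I → ℝ)
    (hw : ∀ p, 0 < w p) (Ψ : Matrix I I ℝ) (hsym : ∀ p r, w p * Ψ p r = w r * Ψ r p) {η : ℝ}
    (hη : ∀ (t : ℝ) (x : I → ℝ), x ≠ 0 → Ψ.mulVec x = t • x → t ≤ η) (x : I → ℝ) :
    ∑ p, ∑ r, w p * Ψ p r * (x p * x r) ≤ η * ∑ p, w p * x p ^ 2 := by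
  have hs : ∀ p, 0 < √(w p) := fun p => Real.sqrt_pos.2 (hw p)
  have hss : ∀ p, √(w p) * √(w p) = w p := fun p => Real.mul_self_sqrt (hw p).le
  let M : Matrix I I ℝ := Matrix.of fun p r => √(w p) * Ψ p r / √(w r)
  let N : Matrix I I ℝ := η • (1 : Matrix I I ℝ) - M
  have hM : M.IsHermitian := by
    refine Matrix.IsHermitian.ext fun p r => ?_
    simp only [M, Matrix.of_apply, star_trivial]
    have h1 := hsym p r
    rw [div_eq_div_iff (hs p).ne' (hs r).ne']
    rw [← hss p, ← hss r] at h1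
    linarith
  have hN : N.IsHermitian := by
    refine Matrix.IsHermitian.sub ?_ hM
    refine Matrix.IsHermitian.ext fun p r => ?_
    simp [Matrix.one_apply, eq_comm]
  have hpsd : N.PosSemidef := by
    rw [hN.posSemidef_iff_eigenvalues_nonneg]
    intro i
    have h1 := hN.mulVec_eigenvectorBasis i
    set y : I → ℝ := (hN.eigenvectorBasis i).ofLp with hy
    have hy0 : y ≠ 0 := by
      intro h0
      have := hN.eigenvectorBasis.toBasis.ne_zero i
      apply this
      ext j
      have := congrFun h0 j
      simpa [hy] using this
    have h2 : Ψ.mulVec (fun p => y p / √(w p)) =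
        (η - hN.eigenvalues i) • (fun p => y p / √(w p)) := by
      funext p
      have h3 := congrFun h1 p
      have h3' : η * y p - ∑ r, √(w p) * Ψ p r / √(w r) * y r = hN.eigenvalues i * y p := by
        have e : N.mulVec y = η • y - M.mulVec y := by
          simp only [N, Matrix.sub_mulVec, Matrix.smul_mulVec, Matrix.one_mulVec]
        rw [e] at h3
        exact h3
      change ∑ r, Ψ p r * (y r / √(w r)) = (η - hN.eigenvalues i) * (y p / √(w p))
      have h4 : ∑ r, √(w p) * Ψ p r / √(w r) * y r = √(w p) * ∑ r, Ψ p r * (y r / √(w r)) := by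
        rw [mul_sum]
        exact sum_congr rfl fun r _ => by ring
      rw [h4] at h3'
      have := (hs p).ne'
      rw [← mul_div_assoc, eq_div_iff this]
      linarith
    have h5 := hη _ _ (fun h0 => hy0 (by
      funext p
      have := congrFun h0 p
      simp only [Pi.zero_apply, div_eq_zero_iff, (hs p).ne', or_false] at this
      simpa using this)) h2
    simp only [Pi.zero_apply]
    linarith
  have h6 := hpsd.dotProduct_mulVec_nonneg (fun p => √(w p) * x p)
  simp only [star_trivial, N, Matrix.sub_mulVec, Matrix.smul_mulVec, Matrix.one_mulVec,
    dotProduct_sub, dotProduct_smul, smul_eq_mul, sub_nonneg] at h6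
  have e1 : (fun p => √(w p) * x p) ⬝ᵥ M.mulVec (fun p => √(w p) * x p) =
      ∑ p, ∑ r, w p * Ψ p r * (x p * x r) := by
    simp only [dotProduct, Matrix.mulVec, M, Matrix.of_apply]
    refine sum_congr rfl fun p _ => ?_
    rw [mul_sum]
    refine sum_congr rfl fun r _ => ?_
    have := (hs r).ne'
    calc √(w p) * x p * (√(w p) * Ψ p r / √(w r) * (√(w r) * x r))
        = √(w p) * √(w p) * Ψ p r * (x p * x r) := by field_simp
      _ = _ := by rw [hss]
  have e2 : (fun p => √(w p) * x p) ⬝ᵥ (fun p => √(w p) * x p) = ∑ p, w p * x p ^ 2 := by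
    simp only [dotProduct]
    refine sum_congr rfl fun p _ => ?_
    linear_combination x p ^ 2 * hss p
  rwa [e1, e2] at h6

variable {V : Type} [Fintype V] [DecidableEq V] {q : ℕ}

lemma cE_congr {μ : (V → Fin q) → ℝ} {Λ : Finset V} {f g : (V → Fin q) → ℝ} {τ : V → Fin q}
    (h : ∀ σ : V → Fin q, (∀ v ∈ Λ, σ v = τ v) → f σ = g σ) : cE μ Λ f τ = cE μ Λ g τ := by
  simp only [cE]
  congr 1
  refine sum_congr rfl fun σ _ => ?_
  unfold ind
  split_ifs with h1
  · rw [h σ h1]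
  · simp

lemma ind_insert {Λ : Finset V} {v : V} (hv : v ∉ Λ) (τ σ : V → Fin q) (i : Fin q) :
    ind (insert v Λ) (Function.update τ v i) σ = if σ v = i then ind Λ τ σ else 0 := by
  unfold ind
  have : (∀ w ∈ insert v Λ, σ w = Function.update τ v i w) ↔ σ v = i ∧ ∀ w ∈ Λ, σ w = τ w := by
    rw [forall_mem_insert, Function.update_self]
    refine and_congr_right fun _ => forall₂_congr fun w hw => ?_
    rw [Function.update_of_ne (fun h => hv (by rw [← h]; exact hw))]
  simp only [this]
  split_ifs <;> simp_all

lemma prAgree_insert {μ : (V → Fin q) → ℝ} {Λ : Finset V} {v : V} (hv : v ∉ Λ) (τ : V → Fin q)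
    (i : Fin q) : prAgree μ (insert v Λ) (Function.update τ v i) =
      ∑ σ, if σ v = i then μ σ * ind Λ τ σ else 0 := by
  rw [prAgree_eq]
  refine sum_congr rfl fun σ _ => ?_
  rw [ind_insert hv]
  split_ifs <;> simp

lemma cE_one_point (μ : (V → Fin q) → ℝ) {Λ : Finset V} {v : V} (hv : v ∉ Λ) (τ : V → Fin q)
    (h : Fin q → ℝ) : cE μ Λ (fun σ => h (σ v)) τ = ∑ i, condProb μ Λ τ v i * h i := by
  simp only [cE, condProb, prAgree_insert hv, div_mul_eq_mul_div]
  rw [← sum_div]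
  congr 1
  simp_rw [sum_mul]
  rw [sum_comm]
  refine sum_congr rfl fun σ _ => ?_
  rw [sum_eq_single (σ v)]
  · rw [if_pos rfl]; ring
  · intro i _ hne
    rw [if_neg (Ne.symm hne), zero_mul]
  · simp

/-- Joint probability of the spins `i` at `u` and `j` at `v` given `τ` on `Λ`. -/
noncomputable def jointProb (μ : (V → Fin q) → ℝ) (Λ : Finset V) (τ : V → Fin q) (u : V)
    (i : Fin q) (v : V) (j : Fin q) : ℝ :=
  prAgree μ (insert v (insert u Λ)) (Function.update (Function.update τ u i) v j) /
    prAgree μ Λ τ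

lemma cE_two_point (μ : (V → Fin q) → ℝ) {Λ : Finset V} {u v : V} (hu : u ∉ Λ)
    (hv : v ∉ insert u Λ) (τ : V → Fin q) (h k : Fin q → ℝ) :
    cE μ Λ (fun σ => h (σ u) * k (σ v)) τ =
      ∑ i, ∑ j, jointProb μ Λ τ u i v j * (h i * k j) := by
  simp only [cE, jointProb, prAgree_insert hv, div_mul_eq_mul_div, ← sum_div]
  congr 1
  simp_rw [sum_mul]
  have : ∀ i, ∑ j, ∑ σ : V → Fin q, (if σ v = j then
      μ σ * ind (insert u Λ) (Function.update τ u i) σ else 0) * (h i * k j) =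
      ∑ σ : V → Fin q, (if σ u = i then μ σ * ind Λ τ σ * (h i * k (σ v)) else 0) := by
    intro i
    rw [sum_comm]
    refine sum_congr rfl fun σ _ => ?_
    rw [sum_eq_single (σ v)]
    · rw [if_pos rfl, ind_insert hu]
      split_ifs <;> simp
    · intro j _ hne
      rw [if_neg (Ne.symm hne), zero_mul]
    · simp
  simp_rw [this]
  rw [sum_comm]
  refine sum_congr rfl fun σ _ => ?_
  rw [sum_eq_single (σ u)]
  · rw [if_pos rfl]; ring
  · intro i _ hne
    rw [if_neg (Ne.symm hne)]
  · simp

lemma jointProb_symm (μ : (V → Fin q) → ℝ) (Λ : Finset V) (τ : V → Fin q) {u v : V}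
    (huv : u ≠ v) (i j : Fin q) : jointProb μ Λ τ u i v j = jointProb μ Λ τ v j u i := by
  rw [jointProb, jointProb, insert_comm, Function.update_comm huv]

lemma condProb_nonneg {μ : (V → Fin q) → ℝ} (hμ : ∀ σ, 0 ≤ μ σ) (Λ : Finset V)
    (τ : V → Fin q) (v : V) (i : Fin q) : 0 ≤ condProb μ Λ τ v i :=
  div_nonneg (prAgree_nonneg hμ _ _) (prAgree_nonneg hμ _ _)

lemma jointProb_eq_zero {μ : (V → Fin q) → ℝ} (hμ : ∀ σ, 0 ≤ μ σ) {Λ : Finset V}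
    {τ : V → Fin q} {u v : V} (hv : v ∉ insert u Λ) {i : Fin q} (j : Fin q)
    (h : ¬ 0 < condProb μ Λ τ u i) : jointProb μ Λ τ u i v j = 0 := by
  refine le_antisymm ?_ (div_nonneg (prAgree_nonneg hμ _ _) (prAgree_nonneg hμ _ _))
  refine le_trans (div_le_div_of_nonneg_right
    (prAgree_anti hμ (subset_insert v (insert u Λ)) _) (prAgree_nonneg hμ _ _)) ?_
  rw [depOn_prAgree μ (insert u Λ) _ (Function.update τ u i)]
  · exact not_lt.1 h
  · intro w hw
    rw [Function.update_of_ne]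
    rintro rfl
    exact hv hw

lemma condProb_mul_condProb {μ : (V → Fin q) → ℝ} {Λ : Finset V}
    {τ : V → Fin q} {u : V} {i : Fin q} (h : 0 < condProb μ Λ τ u i) (v : V) (j : Fin q) :
    condProb μ Λ τ u i * condProb μ (insert u Λ) (Function.update τ u i) v j =
      jointProb μ Λ τ u i v j := by
  have h1 : prAgree μ (insert u Λ) (Function.update τ u i) ≠ 0 := by
    intro h0
    rw [condProb, h0, zero_div] at h
    exact lt_irrefl _ h
  rw [condProb, condProb, jointProb]
  field_simp

lemma sum_infIdx (μ : (V → Fin q) → ℝ) (Λ : Finset V) (τ : V → Fin q) (F : V → Fin q → ℝ)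
    (hF : ∀ u ∉ Λ, ∀ i, ¬ 0 < condProb μ Λ τ u i → F u i = 0) :
    ∑ p : InfIdx μ Λ τ, F p.1.1 p.1.2 = ∑ u ∈ Λᶜ, ∑ i, F u i := by
  rw [← sum_product' (s := Λᶜ) (t := Finset.univ) (f := F)]
  rw [← sum_subset (s₁ := ((Λᶜ ×ˢ (Finset.univ : Finset (Fin q))).filter
    fun p => 0 < condProb μ Λ τ p.1 p.2)) (filter_subset _ _)]
  · symm
    exact Finset.sum_subtype (p := fun p : V × Fin q => p.1 ∉ Λ ∧ 0 < condProb μ Λ τ p.1 p.2) _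
      (fun p => by simp) (fun p => F p.1 p.2)
  · intro p hp hp'
    simp only [mem_product, mem_compl, mem_univ, and_true, mem_filter, not_and] at hp hp'
    exact hF _ hp _ (hp' hp)

/-- Spectral independence as a bound on pair covariances: for centred functions `g v` of the
single spins outside `Λ`, the sum of pair covariances is at most `η` times the sum of the
variances. -/
lemma sum_cov_le {μ : (V → Fin q) → ℝ} (hμ : ∀ σ, 0 ≤ μ σ) {η : ℝ}
    (hsi : SpectrallyIndependent μ η) {Λ : Finset V} (hΛ : Λ ≠ Finset.univ) {τ : V → Fin q}
    (hτ : 0 < prAgree μ Λ τ) (g : V → (V → Fin q) → ℝ)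
    (hg : ∀ v, DepOn (insert v Λ) (g v)) (hg0 : ∀ v, cE μ Λ (g v) τ = 0) :
    ∑ u ∈ Λᶜ, ∑ v ∈ (insert u Λ)ᶜ, cE μ Λ (fun σ => g u σ * g v σ) τ ≤
      η * ∑ v ∈ Λᶜ, cE μ Λ (fun σ => g v σ ^ 2) τ := by
  let G : V → Fin q → ℝ := fun v i => g v (Function.update τ v i)
  have hG : ∀ v, ∀ σ : V → Fin q, (∀ w ∈ Λ, σ w = τ w) → g v σ = G v (σ v) := by
    intro v σ hσ
    refine hg v _ _ fun w hw => ?_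
    by_cases hwv : w = v
    · rw [hwv, Function.update_self]
    · rw [Function.update_of_ne hwv]
      exact hσ w ((mem_insert.1 hw).resolve_left hwv)
  have hG0 : ∀ v ∉ Λ, ∑ i, condProb μ Λ τ v i * G v i = 0 := by
    intro v hv
    rw [← cE_one_point μ hv τ, ← hg0 v]
    exact cE_congr fun σ hσ => (hG v σ hσ).symm
  have hL : ∀ u ∈ Λᶜ, ∀ v ∈ (insert u Λ)ᶜ, cE μ Λ (fun σ => g u σ * g v σ) τ =
      ∑ i, ∑ j, (jointProb μ Λ τ u i v j - condProb μ Λ τ u i * condProb μ Λ τ v j) *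
        (G u i * G v j) := by
    intro u hu v hv
    rw [mem_compl] at hu hv
    have hv' : v ∉ Λ := fun h => hv (mem_insert_of_mem h)
    have e1 : cE μ Λ (fun σ => g u σ * g v σ) τ = ∑ i, ∑ j, jointProb μ Λ τ u i v j *
        (G u i * G v j) := by
      rw [← cE_two_point μ hu hv τ]
      exact cE_congr fun σ hσ => by rw [hG u σ hσ, hG v σ hσ]
    have e2 : ∑ i, ∑ j, condProb μ Λ τ u i * condProb μ Λ τ v j * (G u i * G v j) = 0 := by
      have : ∀ i, ∑ j, condProb μ Λ τ u i * condProb μ Λ τ v j * (G u i * G v j) =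
          condProb μ Λ τ u i * G u i * ∑ j, condProb μ Λ τ v j * G v j := by
        intro i
        rw [mul_sum]
        exact sum_congr rfl fun j _ => by ring
      simp_rw [this, hG0 v hv', mul_zero, sum_const_zero]
    simp_rw [sub_mul, sum_sub_distrib]
    rw [e2, sub_zero, e1]
  have hR : ∀ v ∈ Λᶜ, cE μ Λ (fun σ => g v σ ^ 2) τ =
      ∑ i, condProb μ Λ τ v i * G v i ^ 2 := by
    intro v hv
    rw [mem_compl] at hv
    rw [← cE_one_point μ hv τ (fun i => G v i ^ 2)]
    exact cE_congr fun σ hσ => by rw [hG v σ hσ]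
  rw [sum_congr rfl fun u hu => sum_congr rfl (hL u hu), sum_congr rfl hR]
  have key := quadForm_le_of_reversible (fun p : InfIdx μ Λ τ => condProb μ Λ τ p.1.1 p.1.2)
    (fun p => p.2.2) (inflMatrix μ Λ τ) (by
      intro p r
      simp only [inflMatrix, Matrix.of_apply]
      by_cases h : p.1.1 = r.1.1
      · rw [if_pos h, if_pos h.symm, mul_zero, mul_zero]
      · rw [if_neg h, if_neg (Ne.symm h), mul_sub, mul_sub, condProb_mul_condProb p.2.2,
          condProb_mul_condProb r.2.2, jointProb_symm μ Λ τ h, mul_comm (condProb μ Λ τ p.1.1 _)])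
    (hsi Λ hΛ τ hτ) (fun p => G p.1.1 p.1.2)
  let H : V → Fin q → V → Fin q → ℝ := fun u i v j => if u = v then 0 else
    (jointProb μ Λ τ u i v j - condProb μ Λ τ u i * condProb μ Λ τ v j) * (G u i * G v j)
  have hz : ∀ u ∉ Λ, ∀ i, ¬ 0 < condProb μ Λ τ u i → condProb μ Λ τ u i = 0 := fun u _ i h =>
    le_antisymm (not_lt.1 h) (condProb_nonneg hμ _ _ _ _)
  have hH1 : ∀ u ∉ Λ, ∀ i, ¬ 0 < condProb μ Λ τ u i → ∀ v ∉ Λ, ∀ j, H u i v j = 0 := by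
    intro u hu i hi v hv j
    simp only [H]
    split_ifs with huv
    · rfl
    · rw [jointProb_eq_zero hμ _ j hi, hz u hu i hi]
      · ring
      · simp [hv, Ne.symm huv]
  have hH2 : ∀ u v i j, H u i v j = H v j u i := by
    intro u v i j
    simp only [H]
    by_cases h : u = v
    · rw [if_pos h, if_pos h.symm]
    · rw [if_neg h, if_neg (Ne.symm h), jointProb_symm μ Λ τ h]; ring
  have k1 : ∑ p : InfIdx μ Λ τ, ∑ r : InfIdx μ Λ τ, condProb μ Λ τ p.1.1 p.1.2 *
      inflMatrix μ Λ τ p r * (G p.1.1 p.1.2 * G r.1.1 r.1.2) =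
      ∑ u ∈ Λᶜ, ∑ v ∈ (insert u Λ)ᶜ, ∑ i, ∑ j,
        (jointProb μ Λ τ u i v j - condProb μ Λ τ u i * condProb μ Λ τ v j) *
        (G u i * G v j) := by
    have : ∀ p : InfIdx μ Λ τ, ∑ r : InfIdx μ Λ τ, condProb μ Λ τ p.1.1 p.1.2 *
      inflMatrix μ Λ τ p r * (G p.1.1 p.1.2 * G r.1.1 r.1.2) =
        ∑ v ∈ Λᶜ, ∑ j, H p.1.1 p.1.2 v j := by
      intro p
      rw [← sum_infIdx μ Λ τ (fun v j => H p.1.1 p.1.2 v j)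
        (fun v hv j hj => by rw [hH2]; exact hH1 v hv j hj _ p.2.1 _)]
      refine sum_congr rfl fun r _ => ?_
      simp only [H, inflMatrix, Matrix.of_apply]
      split_ifs with h
      · ring
      · rw [mul_sub, condProb_mul_condProb p.2.2]
    rw [sum_congr rfl fun p _ => this p,
      sum_infIdx μ Λ τ (fun u i => ∑ v ∈ Λᶜ, ∑ j, H u i v j)
        (fun u hu i hi => sum_eq_zero fun v hv => sum_eq_zero fun j _ =>
          hH1 u hu i hi v (mem_compl.1 hv) j)]
    refine sum_congr rfl fun u hu => ?_
    rw [sum_comm]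
    have hsub : (insert u Λ)ᶜ ⊆ Λᶜ := by
      intro v hv
      rw [mem_compl] at hv ⊢
      exact fun h => hv (mem_insert_of_mem h)
    rw [← sum_subset hsub]
    · refine sum_congr rfl fun v hv => sum_congr rfl fun i _ => sum_congr rfl fun j _ => ?_
      simp only [H]
      rw [if_neg]
      rintro rfl
      simp at hv
    · intro v hv hv'
      have : u = v := by
        simp only [mem_compl, mem_insert, not_or, not_and, not_not] at hv hv'
        by_contra h
        exact hv (hv' (Ne.symm h))
      refine sum_eq_zero fun i _ => sum_eq_zero fun j _ => ?_
      simp only [H]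
      rw [if_pos this]
  have k2 : ∑ p : InfIdx μ Λ τ, condProb μ Λ τ p.1.1 p.1.2 * G p.1.1 p.1.2 ^ 2 =
      ∑ v ∈ Λᶜ, ∑ i, condProb μ Λ τ v i * G v i ^ 2 :=
    sum_infIdx μ Λ τ (fun v i => condProb μ Λ τ v i * G v i ^ 2)
      (fun u hu i hi => by rw [hz u hu i hi, zero_mul])
  rw [k1, k2] at key
  exact key

end Spectral

/-! ### Local entropy contraction -/

section Local

variable {V : Type} [Fintype V] [DecidableEq V] {q : ℕ}

/-- Squared Hellinger distance is at most relative entropy, pointwise. -/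
lemma sq_sqrt_sub_le {a c : ℝ} (ha : 0 < a) (hc : 0 < c) :
    (√a - √c) ^ 2 ≤ a * (Real.log a - Real.log c) - a + c := by
  have hp := Real.sqrt_pos.2 ha
  have hr := Real.sqrt_pos.2 hc
  have h := mul_le_mul_of_nonneg_left (mul_log_ge hp hr) hp.le
  have hpp := Real.mul_self_sqrt ha.le
  have hrr := Real.mul_self_sqrt hc.le
  rw [Real.log_sqrt ha.le, Real.log_sqrt hc.le] at h
  have e : √a * (√a * (Real.log a / 2 - Real.log c / 2)) =
      a * (Real.log a - Real.log c) / 2 := by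
    rw [← mul_assoc, hpp]; ring
  rw [e] at h
  nlinarith

/-- For densities bounded by `1 / b` the `χ²` term is controlled by the entropy term. -/
lemma chi_le_ent {a c b : ℝ} (ha : 0 < a) (hc : 0 < c) (hb0 : 0 < b) (hb1 : b ≤ 1)
    (hac : b * a ≤ c) :
    (a - c) ^ 2 / c ≤ 4 / b * (a * (Real.log a - Real.log c) - a + c) := by
  have h := sq_sqrt_sub_le ha hc
  have hpp := Real.sq_sqrt ha.le
  have hrr := Real.sq_sqrt hc.le
  refine le_trans ?_ (mul_le_mul_of_nonneg_left h (by positivity))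
  rw [div_le_iff₀ hc]
  have e : (a - c) ^ 2 = (√a - √c) ^ 2 * (√a + √c) ^ 2 := by
    rw [← mul_pow, ← hpp, ← hrr]
    simp only [Real.sqrt_sq (Real.sqrt_nonneg _)]
    ring
  rw [e]
  have h2 : (√a + √c) ^ 2 ≤ 4 / b * c := by
    rw [div_mul_eq_mul_div, le_div_iff₀ hb0]
    have : (√a + √c) ^ 2 ≤ 2 * a + 2 * c := by nlinarith [sq_nonneg (√a - √c)]
    nlinarith
  nlinarith [mul_le_mul_of_nonneg_left h2 (sq_nonneg (√a - √c))]

/-- `E[X / f_Λ]` only sees `X` through its conditional expectation on `Λ`. -/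
lemma sum_div_cE {μ : (V → Fin q) → ℝ} (hμ : ∀ σ, 0 ≤ μ σ) (Λ : Finset V)
    (X f : (V → Fin q) → ℝ) :
    ∑ σ, μ σ * (X σ / cE μ Λ f σ) = ∑ σ, μ σ * (cE μ Λ X σ / cE μ Λ f σ) := by
  have hd : DepOn Λ (fun σ => (cE μ Λ f σ)⁻¹) := fun σ τ h => by
    simp only [depOn_cE μ Λ f σ τ h]
  simp only [div_eq_mul_inv]
  exact (sum_cE_mul hμ Λ X hd).symm

/-- The increment of `F` on adding `v` is an average relative entropy, hence it controls the
corresponding `χ²` divergence. -/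
lemma sum_chi_le {μ : (V → Fin q) → ℝ} (hμ : ∀ σ, 0 ≤ μ σ) {b : ℝ} (hb0 : 0 < b) (hb1 : b < 1)
    (hmb : MarginallyBounded μ b) {f : (V → Fin q) → ℝ} (hf : ∀ σ, 0 < f σ) (Λ : Finset V)
    {v : V} (hv : v ∉ Λ) :
    ∑ σ, μ σ * ((cE μ (insert v Λ) f σ - cE μ Λ f σ) ^ 2 / cE μ Λ f σ) ≤
      4 / b * (entF μ f (insert v Λ) - entF μ f Λ) := by
  have h0 : entF μ f (insert v Λ) - entF μ f Λ = ∑ σ, μ σ * (cE μ (insert v Λ) f σ *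
      (Real.log (cE μ (insert v Λ) f σ) - Real.log (cE μ Λ f σ)) - cE μ (insert v Λ) f σ
        + cE μ Λ f σ) := by
    simp only [mul_add, mul_sub, sum_add_distrib, sum_sub_distrib]
    rw [sum_cE hμ, sum_cE hμ, entF_eq hμ f (subset_insert v Λ), entF]
    ring
  rw [h0, mul_sum]
  refine sum_le_sum fun σ _ => ?_
  rcases (hμ σ).eq_or_lt with h | h
  · rw [← h]; simp
  rw [mul_left_comm]
  refine mul_le_mul_of_nonneg_left ?_ h.le
  refine chi_le_ent (cE_pos hμ _ hf σ h) (cE_pos hμ _ hf σ h) hb0 hb1.le ?_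
  have h1 := cE_mul_prAgree_anti hμ (subset_insert v Λ) (fun σ => (hf σ).le) σ h
  have h2 := prAgree_union_ge hμ hb0 hmb Λ σ h {v} (by simpa using hv)
  simp only [card_singleton, pow_one] at h2
  rw [← insert_eq] at h2
  have h3 := h.trans_le (le_prAgree hμ Λ σ)
  have h4 := mul_le_mul_of_nonneg_left h2 (cE_pos hμ (insert v Λ) hf σ h).le
  refine le_of_mul_le_mul_right ?_ h3
  calc _ = cE μ (insert v Λ) f σ * (b * prAgree μ Λ σ) := by ring
    _ ≤ _ := h4.trans h1

/-- Local entropy contraction: summed over ordered pairs outside `Λ`, the second differences of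
`F = entF μ f` at `Λ` are at least `-(4 η / b²)` times the sum of its first differences.
`entF_supermod` bounds the second differences below by covariances weighted by `1 / f_Λ`, spectral
independence bounds these by `η` times the variances, and the weighted variances are `χ²` terms
bounded by entropies. -/
lemma second_diff_ge {μ : (V → Fin q) → ℝ} (hμ : ∀ σ, 0 ≤ μ σ) {b η : ℝ} (hb0 : 0 < b)
    (hb1 : b < 1) (hη : 0 < η) (hmb : MarginallyBounded μ b) (hsi : SpectrallyIndependent μ η)
    {f : (V → Fin q) → ℝ} (hf : ∀ σ, 0 < f σ) (Λ : Finset V) :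
    -(4 * η / b ^ 2 * ∑ v ∈ Λᶜ, (entF μ f (insert v Λ) - entF μ f Λ)) ≤
      ∑ u ∈ Λᶜ, ∑ v ∈ (insert u Λ)ᶜ, (entF μ f (insert v (insert u Λ)) - entF μ f (insert u Λ)
        - entF μ f (insert v Λ) + entF μ f Λ) := by
  by_cases hΛ : Λ = univ
  · subst hΛ; simp
  let g : V → (V → Fin q) → ℝ := fun v σ => cE μ (insert v Λ) f σ - cE μ Λ f σ
  have hg : ∀ v, DepOn (insert v Λ) (g v) := fun v σ τ h => by
    simp only [g]
    rw [depOn_cE μ _ f σ τ h, depOn_cE μ Λ f σ τ fun w hw => h w (mem_insert_of_mem hw)]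
  have hg0 : ∀ v τ, cE μ Λ (g v) τ = 0 := fun v τ => by
    simp only [g]
    rw [cE_sub, cE_tower hμ (subset_insert v Λ), cE_tower hμ (subset_refl Λ), sub_self]
  have h1 : ∀ u v, -(∑ σ, μ σ * (cE μ Λ (fun σ => g u σ * g v σ) σ / cE μ Λ f σ)) ≤
      entF μ f (insert v (insert u Λ)) - entF μ f (insert u Λ)
        - entF μ f (insert v Λ) + entF μ f Λ := by
    intro u v
    rw [← sum_div_cE hμ Λ]
    exact entF_supermod hμ hf (subset_insert u Λ) (subset_insert v _)
      (insert_subset_insert v (subset_insert u Λ))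
  refine le_trans ?_ (sum_le_sum fun u _ => sum_le_sum fun v _ => h1 u v)
  simp only [sum_neg_distrib]
  rw [neg_le_neg_iff]
  have e1 : ∑ u ∈ Λᶜ, ∑ v ∈ (insert u Λ)ᶜ,
      ∑ σ, μ σ * (cE μ Λ (fun σ => g u σ * g v σ) σ / cE μ Λ f σ) =
      ∑ σ, μ σ * ((∑ u ∈ Λᶜ, ∑ v ∈ (insert u Λ)ᶜ, cE μ Λ (fun σ => g u σ * g v σ) σ) /
        cE μ Λ f σ) := by
    simp only [sum_div, mul_sum]
    rw [sum_comm (s := univ)]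
    exact sum_congr rfl fun u _ => sum_comm
  rw [e1]
  have h2 : ∑ σ, μ σ * ((∑ u ∈ Λᶜ, ∑ v ∈ (insert u Λ)ᶜ, cE μ Λ (fun σ => g u σ * g v σ) σ) /
        cE μ Λ f σ) ≤
      ∑ σ, μ σ * ((η * ∑ v ∈ Λᶜ, cE μ Λ (fun σ => g v σ ^ 2) σ) / cE μ Λ f σ) := by
    refine sum_le_sum fun σ _ => ?_
    rcases (hμ σ).eq_or_lt with h | h
    · rw [← h]; simp
    refine mul_le_mul_of_nonneg_left (div_le_div_of_nonneg_right ?_ (cE_pos hμ Λ hf σ h).le) h.le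
    exact sum_cov_le hμ hsi hΛ (h.trans_le (le_prAgree hμ Λ σ)) g hg (fun v => hg0 v σ)
  refine h2.trans ?_
  have e2 : ∑ σ, μ σ * ((η * ∑ v ∈ Λᶜ, cE μ Λ (fun σ => g v σ ^ 2) σ) / cE μ Λ f σ) =
      η * ∑ v ∈ Λᶜ, ∑ σ, μ σ * (cE μ Λ (fun σ => g v σ ^ 2) σ / cE μ Λ f σ) := by
    rw [sum_comm, mul_sum]
    refine sum_congr rfl fun σ _ => ?_
    rw [mul_sum, mul_sum, sum_div, mul_sum]
    exact sum_congr rfl fun v _ => by ring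
  rw [e2, mul_sum, mul_sum]
  refine sum_le_sum fun v hv => ?_
  rw [← sum_div_cE hμ Λ]
  have h3 := sum_chi_le hμ hb0 hb1 hmb hf Λ (mem_compl.1 hv)
  have h4 : 0 ≤ entF μ f (insert v Λ) - entF μ f Λ :=
    sub_nonneg.2 (entF_mono hμ hf (subset_insert v Λ))
  have h5 : 4 / b ≤ 4 / b ^ 2 := by
    apply div_le_div_of_nonneg_left (by norm_num) (by positivity)
    nlinarith
  calc _ ≤ η * (4 / b * (entF μ f (insert v Λ) - entF μ f Λ)) :=
        mul_le_mul_of_nonneg_left h3 hη.le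
    _ ≤ η * (4 / b ^ 2 * (entF μ f (insert v Λ) - entF μ f Λ)) := by gcongr
    _ = _ := by ring

end Local

/-! ### Averages over sets of given size -/

section Averages

/-- If the increments of `B` satisfy `(m - K) d_{m+1} ≤ m d_m`, then `m d_m ≤ (K + 1) B_m`. -/
lemma incr_le {B : ℕ → ℝ} {K : ℝ} (hK : 0 ≤ K) {n : ℕ} (hB0 : B 0 = 0)
    (hmono : ∀ m < n, B m ≤ B (m + 1))
    (hstep : ∀ j, j + 2 ≤ n →
      ((j : ℝ) + 1 - K) * (B (j + 2) - B (j + 1)) ≤ ((j : ℝ) + 1) * (B (j + 1) - B j)) :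
    ∀ j, j + 1 ≤ n → ((j : ℝ) + 1) * (B (j + 1) - B j) ≤ (K + 1) * B (j + 1) := by
  intro j
  induction j with
  | zero =>
    intro hj
    have := hmono 0 hj
    simp only [zero_add, Nat.cast_zero, hB0] at this ⊢
    nlinarith
  | succ j ih =>
    intro hj
    have h1 := ih (by omega)
    have h2 := hstep j hj
    push_cast
    linarith

/-- The function `m ↦ B_m / (m - K)^(K + 1)` is decreasing for `m ≥ l`, by `incr_le` and
Bernoulli's inequality. -/
lemma growth_le {B : ℕ → ℝ} {K : ℝ} (hK : 0 ≤ K) {n : ℕ} (hB0 : B 0 = 0)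
    (hmono : ∀ m < n, B m ≤ B (m + 1))
    (hstep : ∀ j, j + 2 ≤ n →
      ((j : ℝ) + 1 - K) * (B (j + 2) - B (j + 1)) ≤ ((j : ℝ) + 1) * (B (j + 1) - B j))
    {l : ℕ} (hl : K < l) (m : ℕ) (hlm : l ≤ m) (hmn : m ≤ n) :
    B m * ((l : ℝ) - K) ^ (K + 1) ≤ B l * ((m : ℝ) - K) ^ (K + 1) := by
  have hpos : ∀ m ≤ n, 0 ≤ B m := by
    intro m
    induction m with
    | zero => intro _; exact hB0.ge
    | succ m ih => intro h; exact (ih (by omega)).trans (hmono m h)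
  induction m, hlm using Nat.le_induction with
  | base => exact le_rfl
  | succ m hlm ih =>
    have hlm' : (l : ℝ) ≤ m := by exact_mod_cast hlm
    have h1 := incr_le hK hB0 hmono hstep m hmn
    have h2 := ih (by omega)
    have hx : 0 < (m : ℝ) - K := by linarith
    have hBm := hpos m (by omega)
    set x : ℝ := (m : ℝ) - K with hxd
    have hxs : 0 < x ^ (K + 1) := Real.rpow_pos_of_pos hx _
    have h3 : 1 + (K + 1) * (1 / x) ≤ (1 + 1 / x) ^ (K + 1) :=
      one_add_mul_self_le_rpow_one_add (by have : 0 < 1 / x := by positivity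
                                           linarith) (by linarith)
    have h4 : B (m + 1) ≤ (1 + (K + 1) * (1 / x)) * B m := by
      have : x * B (m + 1) ≤ (x + (K + 1)) * B m := by rw [hxd]; linarith
      have e : (1 + (K + 1) * (1 / x)) * B m = (x + (K + 1)) * B m / x := by field_simp
      rw [e, le_div_iff₀ hx]
      linarith
    have h5 : (1 + 1 / x) ^ (K + 1) * x ^ (K + 1) = (x + 1) ^ (K + 1) := by
      rw [← Real.mul_rpow (by positivity) hx.le]
      congr 1
      field_simp
    have h6 : B (m + 1) ≤ (1 + 1 / x) ^ (K + 1) * B m :=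
      h4.trans (mul_le_mul_of_nonneg_right h3 hBm)
    have e7 : ((m + 1 : ℕ) : ℝ) - K = x + 1 := by rw [hxd]; push_cast; ring
    rw [e7, ← h5]
    have hls : 0 ≤ ((l : ℝ) - K) ^ (K + 1) := Real.rpow_nonneg (by linarith) _
    have hq : 0 ≤ (1 + 1 / x) ^ (K + 1) := Real.rpow_nonneg (by positivity) _
    calc B (m + 1) * ((l : ℝ) - K) ^ (K + 1)
        ≤ (1 + 1 / x) ^ (K + 1) * B m * ((l : ℝ) - K) ^ (K + 1) :=
          mul_le_mul_of_nonneg_right h6 hls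
      _ = (1 + 1 / x) ^ (K + 1) * (B m * ((l : ℝ) - K) ^ (K + 1)) := by ring
      _ ≤ (1 + 1 / x) ^ (K + 1) * (B l * x ^ (K + 1)) := mul_le_mul_of_nonneg_left h2 hq
      _ = _ := by ring

variable {V : Type} [Fintype V] [DecidableEq V]

/-- Double counting of the pairs `(Λ, v)` with `|Λ| = k` and `v ∉ Λ`. -/
lemma sum_powersetCard_insert (k : ℕ) (G : Finset V → ℝ) :
    ∑ Λ ∈ powersetCard k univ, ∑ v ∈ Λᶜ, G (insert v Λ) =
      ((k : ℝ) + 1) * ∑ Λ ∈ powersetCard (k + 1) univ, G Λ := by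
  have e : ((k : ℝ) + 1) * ∑ Λ ∈ powersetCard (k + 1) univ, G Λ =
      ∑ Λ ∈ powersetCard (k + 1) (univ : Finset V), ∑ _v ∈ Λ, G Λ := by
    rw [mul_sum]
    refine sum_congr rfl fun Λ hΛ => ?_
    rw [sum_const, (mem_powersetCard.1 hΛ).2, nsmul_eq_mul]
    push_cast; ring
  rw [e, sum_sigma', sum_sigma']
  refine sum_bij' (fun p _ => ⟨insert p.2 p.1, p.2⟩) (fun p _ => ⟨p.1.erase p.2, p.2⟩)
    ?_ ?_ ?_ ?_ ?_
  · rintro ⟨Λ, v⟩ h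
    simp only [mem_sigma, mem_powersetCard, mem_compl, subset_univ, true_and] at h ⊢
    exact ⟨by rw [card_insert_of_notMem h.2, h.1], mem_insert_self _ _⟩
  · rintro ⟨Λ, v⟩ h
    simp only [mem_sigma, mem_powersetCard, mem_compl, subset_univ, true_and] at h ⊢
    exact ⟨by rw [card_erase_of_mem h.2, h.1]; rfl, notMem_erase _ _⟩
  · rintro ⟨Λ, v⟩ h
    simp only [mem_sigma, mem_powersetCard, mem_compl, subset_univ, true_and] at h
    simp [erase_insert h.2]
  · rintro ⟨Λ, v⟩ h
    simp only [mem_sigma, mem_powersetCard, subset_univ, true_and] at h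
    simp [insert_erase h.2]
  · intro _ _
    rfl

/-- Average of `F` over the sets of size `k`. -/
noncomputable def avgF (F : Finset V → ℝ) (k : ℕ) : ℝ :=
  (∑ Λ ∈ powersetCard k univ, F Λ) / ((Fintype.card V).choose k : ℝ)

lemma avgF_mono {F : Finset V → ℝ} (hF : ∀ Λ v, F Λ ≤ F (insert v Λ)) {k : ℕ}
    (hk : k < Fintype.card V) : avgF F k ≤ avgF F (k + 1) := by
  have h1 : ∑ Λ ∈ powersetCard k (univ : Finset V), ∑ v ∈ Λᶜ, F Λ ≤
      ∑ Λ ∈ powersetCard k univ, ∑ v ∈ Λᶜ, F (insert v Λ) :=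
    sum_le_sum fun Λ _ => sum_le_sum fun v _ => hF Λ v
  rw [sum_powersetCard_insert] at h1
  have e : ∑ Λ ∈ powersetCard k (univ : Finset V), ∑ v ∈ Λᶜ, F Λ =
      ((Fintype.card V : ℝ) - k) * ∑ Λ ∈ powersetCard k univ, F Λ := by
    rw [mul_sum]
    refine sum_congr rfl fun Λ hΛ => ?_
    rw [sum_const, card_compl, (mem_powersetCard.1 hΛ).2, nsmul_eq_mul, Nat.cast_sub hk.le]
  rw [e] at h1
  have hc := Nat.choose_succ_right_eq (Fintype.card V) k
  have hc' : ((Fintype.card V).choose (k + 1) : ℝ) * (k + 1) =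
      (Fintype.card V).choose k * ((Fintype.card V : ℝ) - k) := by
    rw [← Nat.cast_sub hk.le]; exact_mod_cast hc
  have p1 : (0 : ℝ) < (Fintype.card V).choose k := by exact_mod_cast Nat.choose_pos hk.le
  have p2 : (0 : ℝ) < (Fintype.card V).choose (k + 1) := by exact_mod_cast Nat.choose_pos hk
  have p3 : (0 : ℝ) < (Fintype.card V : ℝ) - k := by
    have : (k : ℝ) < Fintype.card V := by exact_mod_cast hk
    linarith
  rw [avgF, avgF, div_le_div_iff₀ p1 p2]
  refine le_of_mul_le_mul_right ?_ (by positivity : (0 : ℝ) < k + 1)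
  calc _ = (∑ Λ ∈ powersetCard k univ, F Λ) *
        (((Fintype.card V).choose (k + 1) : ℝ) * (k + 1)) := by ring
    _ = (Fintype.card V).choose k *
        (((Fintype.card V : ℝ) - k) * ∑ Λ ∈ powersetCard k univ, F Λ) := by rw [hc']; ring
    _ ≤ (Fintype.card V).choose k * (((k : ℝ) + 1) * ∑ Λ ∈ powersetCard (k + 1) univ, F Λ) :=
        mul_le_mul_of_nonneg_left h1 p1.le
    _ = _ := by ring

/-- The local bounds on second differences, averaged over all `Λ` of size `k`. -/
lemma avgF_second_diff {F : Finset V → ℝ} {K : ℝ}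
    (hloc : ∀ Λ : Finset V, -(K * ∑ v ∈ Λᶜ, (F (insert v Λ) - F Λ)) ≤
      ∑ u ∈ Λᶜ, ∑ v ∈ (insert u Λ)ᶜ, (F (insert v (insert u Λ)) - F (insert u Λ)
        - F (insert v Λ) + F Λ)) {k : ℕ} (hk : k + 2 ≤ Fintype.card V) :
    -(K * (avgF F (k + 1) - avgF F k)) ≤ ((Fintype.card V : ℝ) - k - 1) *
      (avgF F (k + 2) - 2 * avgF F (k + 1) + avgF F k) := by
  set n := Fintype.card V with hn
  set T : ℕ → ℝ := fun k => ∑ Λ ∈ powersetCard k (univ : Finset V), F Λ with hT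
  have hcard : ∀ Λ ∈ powersetCard k (univ : Finset V), (Λᶜ.card : ℝ) = (n : ℝ) - k := by
    intro Λ hΛ
    rw [card_compl, (mem_powersetCard.1 hΛ).2, Nat.cast_sub (by omega)]
  have hcard' : ∀ Λ ∈ powersetCard k (univ : Finset V), ∀ u ∈ Λᶜ,
      ((insert u Λ)ᶜ.card : ℝ) = (n : ℝ) - k - 1 := by
    intro Λ hΛ u hu
    rw [card_compl, card_insert_of_notMem (mem_compl.1 hu), (mem_powersetCard.1 hΛ).2,
      Nat.cast_sub (by omega)]
    push_cast; ring
  have hsum := sum_le_sum fun Λ (_ : Λ ∈ powersetCard k (univ : Finset V)) => hloc Λ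
  have e0 : ∑ Λ ∈ powersetCard k (univ : Finset V), ∑ v ∈ Λᶜ, F Λ = ((n : ℝ) - k) * T k := by
    rw [hT, mul_sum]
    refine sum_congr rfl fun Λ hΛ => ?_
    rw [sum_const, nsmul_eq_mul, hcard Λ hΛ]
  have e1 : ∑ Λ ∈ powersetCard k (univ : Finset V), ∑ v ∈ Λᶜ, F (insert v Λ) =
      ((k : ℝ) + 1) * T (k + 1) := sum_powersetCard_insert k F
  have e2 : ∑ Λ ∈ powersetCard k (univ : Finset V), ∑ u ∈ Λᶜ, ∑ v ∈ (insert u Λ)ᶜ,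
      F (insert v (insert u Λ)) = ((k : ℝ) + 1) * (((k : ℝ) + 2) * T (k + 2)) := by
    rw [sum_powersetCard_insert k (fun Λ => ∑ v ∈ Λᶜ, F (insert v Λ)),
      sum_powersetCard_insert]
    push_cast
    ring
  have e3 : ∑ Λ ∈ powersetCard k (univ : Finset V), ∑ u ∈ Λᶜ, ∑ v ∈ (insert u Λ)ᶜ,
      F (insert u Λ) = ((n : ℝ) - k - 1) * (((k : ℝ) + 1) * T (k + 1)) := by
    rw [← e1, mul_sum]
    refine sum_congr rfl fun Λ hΛ => ?_
    rw [mul_sum]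
    refine sum_congr rfl fun u hu => ?_
    rw [sum_const, nsmul_eq_mul, hcard' Λ hΛ u hu]
  have e4 : ∑ Λ ∈ powersetCard k (univ : Finset V), ∑ u ∈ Λᶜ, ∑ v ∈ (insert u Λ)ᶜ,
      F (insert v Λ) = ((n : ℝ) - k - 1) * (((k : ℝ) + 1) * T (k + 1)) := by
    rw [← e1, mul_sum]
    refine sum_congr rfl fun Λ hΛ => ?_
    have : ∀ u ∈ Λᶜ, ∑ v ∈ (insert u Λ)ᶜ, F (insert v Λ) =
        ∑ v ∈ Λᶜ, F (insert v Λ) - F (insert u Λ) := by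
      intro u hu
      rw [compl_insert, sum_erase_eq_sub hu]
    rw [sum_congr rfl this, sum_sub_distrib, sum_const, nsmul_eq_mul, hcard Λ hΛ]
    ring
  have e5 : ∑ Λ ∈ powersetCard k (univ : Finset V), ∑ u ∈ Λᶜ, ∑ v ∈ (insert u Λ)ᶜ, F Λ =
      ((n : ℝ) - k - 1) * (((n : ℝ) - k) * T k) := by
    rw [← e0, mul_sum]
    refine sum_congr rfl fun Λ hΛ => ?_
    rw [mul_sum]
    refine sum_congr rfl fun u hu => ?_
    rw [sum_const, nsmul_eq_mul, hcard' Λ hΛ u hu]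
  simp only [sum_sub_distrib, sum_add_distrib, sum_neg_distrib, ← mul_sum] at hsum
  rw [e0, e1, e2, e3, e4, e5] at hsum
  have p0 : (0 : ℝ) < n.choose k := by exact_mod_cast Nat.choose_pos (by omega)
  have p1 : (0 : ℝ) < n.choose (k + 1) := by exact_mod_cast Nat.choose_pos (by omega)
  have p2 : (0 : ℝ) < n.choose (k + 2) := by exact_mod_cast Nat.choose_pos (by omega)
  have p3 : (0 : ℝ) < (n : ℝ) - k := by
    have : ((k + 2 : ℕ) : ℝ) ≤ n := by exact_mod_cast hk
    push_cast at this
    linarith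
  have t0 : T k = n.choose k * avgF F k := by
    rw [avgF, mul_div_cancel₀ _ p0.ne']
  have t1 : T (k + 1) = n.choose (k + 1) * avgF F (k + 1) := by
    rw [avgF, mul_div_cancel₀ _ p1.ne']
  have t2 : T (k + 2) = n.choose (k + 2) * avgF F (k + 2) := by
    rw [avgF, mul_div_cancel₀ _ p2.ne']
  have c1 : (n.choose (k + 1) : ℝ) * (k + 1) = n.choose k * ((n : ℝ) - k) := by
    rw [← Nat.cast_sub (by omega : k ≤ n)]
    exact_mod_cast Nat.choose_succ_right_eq n k
  have c2 : (n.choose (k + 2) : ℝ) * (k + 2) = n.choose (k + 1) * ((n : ℝ) - k - 1) := by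
    have : ((n - (k + 1) : ℕ) : ℝ) = (n : ℝ) - k - 1 := by
      rw [Nat.cast_sub (by omega)]; push_cast; ring
    rw [← this]
    exact_mod_cast Nat.choose_succ_right_eq n (k + 1)
  have s1 : ((k : ℝ) + 1) * T (k + 1) = n.choose k * ((n : ℝ) - k) * avgF F (k + 1) := by
    rw [t1, ← c1]; ring
  have s2 : ((k : ℝ) + 1) * (((k : ℝ) + 2) * T (k + 2)) =
      n.choose k * ((n : ℝ) - k) * ((n : ℝ) - k - 1) * avgF F (k + 2) := by
    rw [t2, ← c1]
    linear_combination ((k : ℝ) + 1) * avgF F (k + 2) * c2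
  rw [s1, s2, t0] at hsum
  refine le_of_mul_le_mul_left ?_ (mul_pos p0 p3)
  linarith

lemma avgF_card (F : Finset V → ℝ) : avgF F (Fintype.card V) = F univ := by
  rw [avgF, ← card_univ, powersetCard_self]
  simp

lemma avgF_zero (F : Finset V → ℝ) : avgF F 0 = F ∅ := by
  simp [avgF]

/-- Averages over sets of size `n - l` are averages over complements of sets of size `l`. -/
lemma avgF_compl (F : Finset V → ℝ) {l : ℕ} (hl : l ≤ Fintype.card V) :
    avgF F (Fintype.card V) - avgF F (Fintype.card V - l) =
      (∑ S ∈ powersetCard l univ, (F univ - F Sᶜ)) / ((Fintype.card V).choose l : ℝ) := by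
  have p : ((Fintype.card V).choose l : ℝ) ≠ 0 := by
    exact_mod_cast (Nat.choose_pos hl).ne'
  rw [sum_sub_distrib, sum_const, card_powersetCard, card_univ, nsmul_eq_mul, sub_div,
    mul_div_cancel_left₀ _ p, avgF_card]
  congr 1
  rw [avgF, Nat.choose_symm hl]
  congr 1
  refine sum_bij' (fun S _ => Sᶜ) (fun S _ => Sᶜ) ?_ ?_ ?_ ?_ ?_
  · intro S hS
    simp only [mem_powersetCard, subset_univ, true_and] at hS ⊢
    rw [card_compl, hS]; omega
  · intro S hS
    simp only [mem_powersetCard, subset_univ, true_and] at hS ⊢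
    rw [card_compl, hS]
  · simp
  · simp
  · simp

/-- Local-to-global: the local bounds on second differences imply a uniform block
factorization, with an explicit constant. -/
lemma block_factorization {F : Finset V → ℝ} {K θ : ℝ} (hK : 0 ≤ K) (hθ : 0 < θ)
    (hF : ∀ Λ v, F Λ ≤ F (insert v Λ))
    (hloc : ∀ Λ : Finset V, -(K * ∑ v ∈ Λᶜ, (F (insert v Λ) - F Λ)) ≤
      ∑ u ∈ Λᶜ, ∑ v ∈ (insert u Λ)ᶜ, (F (insert v (insert u Λ)) - F (insert u Λ)
        - F (insert v Λ) + F Λ)) {l : ℕ} (hl : l ≤ Fintype.card V)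
    (hθl : θ * Fintype.card V ≤ l) (hθK : 2 * (K + 1) ≤ θ * Fintype.card V) :
    F univ - F ∅ ≤ (2 / θ) ^ (K + 1) *
      ((∑ S ∈ powersetCard l univ, (F univ - F Sᶜ)) / ((Fintype.card V).choose l : ℝ)) := by
  rw [← avgF_compl F hl]
  set n := Fintype.card V with hn
  -- for `F = entF μ f` this is the average conditional entropy of a uniformly random block of
  -- size `m`
  let B : ℕ → ℝ := fun m => avgF F n - avgF F (n - m)
  have hB0 : B 0 = 0 := by simp [B]
  have hmono : ∀ m < n, B m ≤ B (m + 1) := by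
    intro m hm
    have := avgF_mono hF (k := n - (m + 1)) (by omega)
    rw [show n - (m + 1) + 1 = n - m by omega] at this
    simp only [B]
    linarith
  have hstep : ∀ j, j + 2 ≤ n →
      ((j : ℝ) + 1 - K) * (B (j + 2) - B (j + 1)) ≤ ((j : ℝ) + 1) * (B (j + 1) - B j) := by
    intro j hj
    have := avgF_second_diff hloc (k := n - (j + 2)) (by omega)
    rw [← hn, show n - (j + 2) + 1 = n - (j + 1) by omega,
      show n - (j + 2) + 2 = n - j by omega, Nat.cast_sub hj] at this
    simp only [B]
    push_cast at this
    linarith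
  have hKl : K < l := by linarith
  have h := growth_le hK hB0 hmono hstep hKl n hl le_rfl
  have hBn : B n = F univ - F ∅ := by
    simp only [B, Nat.sub_self]
    rw [avgF_zero, hn, avgF_card]
  rw [← hBn]
  change B n ≤ (2 / θ) ^ (K + 1) * B l
  have hBl : 0 ≤ B l := by
    have : ∀ m ≤ n, 0 ≤ B m := by
      intro m
      induction m with
      | zero => intro _; exact hB0.ge
      | succ m ih => intro h; exact (ih (by omega)).trans (hmono m h)
    exact this l hl
  have hlK : 0 < (l : ℝ) - K := by linarith
  have hx : 0 < ((l : ℝ) - K) ^ (K + 1) := Real.rpow_pos_of_pos hlK _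
  have hn0 : (0 : ℝ) ≤ (n : ℝ) - K := by
    have : (l : ℝ) ≤ n := by exact_mod_cast hl
    linarith
  have h2 : ((n : ℝ) - K) ^ (K + 1) ≤ (2 / θ) ^ (K + 1) * ((l : ℝ) - K) ^ (K + 1) := by
    rw [← Real.mul_rpow (by positivity) hlK.le]
    refine Real.rpow_le_rpow hn0 ?_ (by linarith)
    rw [div_mul_eq_mul_div, le_div_iff₀ hθ]
    nlinarith
  refine le_of_mul_le_mul_right ?_ hx
  calc _ ≤ B l * ((n : ℝ) - K) ^ (K + 1) := h
    _ ≤ B l * ((2 / θ) ^ (K + 1) * ((l : ℝ) - K) ^ (K + 1)) :=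
      mul_le_mul_of_nonneg_left h2 hBl
    _ = _ := by ring

end Averages

/-! ### Tensorization over components -/

section Tensor

variable {V : Type} [Fintype V] [DecidableEq V] {q : ℕ}

/-- Exchanging the spins on `A` between two configurations that agree outside `A ∪ B` does not
change the product of their weights: `σ_A` and `σ_B` are conditionally independent. -/
def SwapInv (μ : (V → Fin q) → ℝ) (A B : Finset V) : Prop :=
  ∀ σ σ' : V → Fin q, (∀ v ∉ A ∪ B, σ v = σ' v) →
    μ σ * μ σ' = μ (A.piecewise σ' σ) * μ (A.piecewise σ σ')

lemma cE_mul_of_swapInv {μ : (V → Fin q) → ℝ} (hμ : ∀ σ, 0 ≤ μ σ) {A B : Finset V}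
    (hs : SwapInv μ A B)
    {g g' : (V → Fin q) → ℝ} (hg : DepOn Aᶜ g) (hg' : DepOn Bᶜ g') (τ : V → Fin q)
    (hτ : 0 < μ τ) :
    cE μ (A ∪ B)ᶜ (fun σ => g σ * g' σ) τ = cE μ (A ∪ B)ᶜ g τ * cE μ (A ∪ B)ᶜ g' τ := by
  set W := (A ∪ B)ᶜ with hW
  have hp := (hτ.trans_le (le_prAgree hμ W τ)).ne'
  let Φ : (V → Fin q) × (V → Fin q) → (V → Fin q) × (V → Fin q) :=
    fun p => (A.piecewise p.2 p.1, A.piecewise p.1 p.2)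
  have hΦ : Function.Involutive Φ := by
    rintro ⟨σ, σ'⟩
    simp only [Φ, Prod.mk.injEq]
    constructor <;>
    · funext v
      by_cases hv : v ∈ A <;> simp [hv]
  have hind : ∀ σ σ' : V → Fin q, ind W τ (A.piecewise σ' σ) = ind W τ σ := by
    intro σ σ'
    refine depOn_ind (subset_refl W) τ _ _ fun v hv => ?_
    rw [piecewise_eq_of_notMem]
    rw [hW, mem_compl, mem_union] at hv
    exact fun h => hv (Or.inl h)
  have key : ∑ p : (V → Fin q) × (V → Fin q),
      μ p.1 * (g p.1 * g' p.1) * ind W τ p.1 * (μ p.2 * ind W τ p.2) =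
      ∑ p : (V → Fin q) × (V → Fin q),
      μ p.1 * g p.1 * ind W τ p.1 * (μ p.2 * g' p.2 * ind W τ p.2) := by
    rw [← Equiv.sum_comp (hΦ.toPerm Φ)]
    refine sum_congr rfl fun p _ => ?_
    obtain ⟨σ, σ'⟩ := p
    simp only [Function.Involutive.coe_toPerm, Φ, hind]
    by_cases h1 : ∀ v ∈ W, σ v = τ v
    · by_cases h2 : ∀ v ∈ W, σ' v = τ v
      · have h3 := hs σ σ' fun v hv => by
          have : v ∈ W := by rw [hW, mem_compl]; exact hv
          rw [h1 v this, h2 v this]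
        have h4 : g (A.piecewise σ' σ) = g σ := hg _ _ fun v hv => by
          rw [piecewise_eq_of_notMem _ _ _ (mem_compl.1 hv)]
        have h5 : g' (A.piecewise σ' σ) = g' σ' := hg' _ _ fun v hv => by
          by_cases hA : v ∈ A
          · rw [piecewise_eq_of_mem _ _ _ hA]
          · have : v ∈ W := by
              rw [hW, mem_compl, mem_union]
              exact fun h => h.elim hA (mem_compl.1 hv)
            rw [piecewise_eq_of_notMem _ _ _ hA, h1 v this, h2 v this]
        rw [h4, h5]
        linear_combination -(g σ * g' σ' * ind W τ σ * ind W τ σ') * h3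
      · have : ind W τ σ' = 0 := by unfold ind; rw [if_neg h2]
        rw [this]; ring
    · have : ind W τ σ = 0 := by unfold ind; rw [if_neg h1]
      rw [this]; ring
  rw [Fintype.sum_prod_type, Fintype.sum_prod_type] at key
  simp only [← mul_sum, ← sum_mul] at key
  rw [← prAgree_eq μ W τ] at key
  rw [cE, cE, cE, div_mul_div_comm, ← key]
  field_simp

/-- Entropy tensorizes over conditionally independent blocks. -/
lemma entF_union_le {μ : (V → Fin q) → ℝ} (hμ : ∀ σ, 0 ≤ μ σ) {A B : Finset V}
    (hs : SwapInv μ A B) {f : (V → Fin q) → ℝ} (hf : ∀ σ, 0 < f σ) :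
    entF μ f univ - entF μ f (A ∪ B)ᶜ ≤
      (entF μ f univ - entF μ f Aᶜ) + (entF μ f univ - entF μ f Bᶜ) := by
  have hWA : (A ∪ B)ᶜ ⊆ Aᶜ := compl_subset_compl.2 subset_union_left
  have hWB : (A ∪ B)ᶜ ⊆ Bᶜ := compl_subset_compl.2 subset_union_right
  have h := entF_supermod hμ hf hWA (subset_univ Aᶜ) (subset_univ Bᶜ)
  have h0 : ∑ σ, μ σ * ((cE μ Aᶜ f σ - cE μ (A ∪ B)ᶜ f σ) *
      (cE μ Bᶜ f σ - cE μ (A ∪ B)ᶜ f σ) / cE μ (A ∪ B)ᶜ f σ) = 0 := by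
    rw [sum_div_cE hμ (A ∪ B)ᶜ (fun σ => (cE μ Aᶜ f σ - cE μ (A ∪ B)ᶜ f σ) *
      (cE μ Bᶜ f σ - cE μ (A ∪ B)ᶜ f σ)) f]
    refine sum_eq_zero fun σ _ => ?_
    rcases (hμ σ).eq_or_lt with h1 | h1
    · rw [← h1, zero_mul]
    · rw [cE_mul_of_swapInv hμ hs (g := fun σ => cE μ Aᶜ f σ - cE μ (A ∪ B)ᶜ f σ)
        (g' := fun σ => cE μ Bᶜ f σ - cE μ (A ∪ B)ᶜ f σ) ?_ ?_ σ h1,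
        cE_sub, cE_tower hμ hWA, cE_tower hμ (subset_refl _)]
      · simp
      · intro σ τ h
        simp only [depOn_cE μ _ f σ τ h, depOn_cE μ _ f σ τ fun v hv => h v (hWA hv)]
      · intro σ τ h
        simp only [depOn_cE μ _ f σ τ h, depOn_cE μ _ f σ τ fun v hv => h v (hWB hv)]
  rw [h0] at h
  linarith

/-- Adjacency inside `S`. -/
def adjIn (G : SimpleGraph V) (S : Finset V) (u v : V) : Prop := G.Adj u v ∧ u ∈ S ∧ v ∈ S

/-- The vertex set of the connected component of `v` in the subgraph of `G` induced on `S`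
(it is `{v}` if `v ∉ S`). -/
noncomputable def comp (G : SimpleGraph V) (S : Finset V) (v : V) : Finset V :=
  univ.filter fun u => Relation.ReflTransGen (adjIn G S) v u

lemma mem_comp {G : SimpleGraph V} {S : Finset V} {u v : V} :
    u ∈ comp G S v ↔ Relation.ReflTransGen (adjIn G S) v u := by simp [comp]

lemma self_mem_comp (G : SimpleGraph V) (S : Finset V) (v : V) : v ∈ comp G S v :=
  mem_comp.2 .refl

lemma comp_subset {G : SimpleGraph V} {S : Finset V} {v : V} (hv : v ∈ S) :
    comp G S v ⊆ S := by
  intro u hu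
  induction mem_comp.1 hu with
  | refl => exact hv
  | tail _ h _ => exact h.2.2

lemma mem_comp_symm {G : SimpleGraph V} {S : Finset V} {u v : V} (h : u ∈ comp G S v) :
    v ∈ comp G S u := by
  rw [mem_comp] at h ⊢
  induction h with
  | refl => exact .refl
  | tail _ h ih => exact .head ⟨h.1.symm, h.2.2, h.2.1⟩ ih

lemma comp_eq_of_mem {G : SimpleGraph V} {S : Finset V} {u v : V} (h : u ∈ comp G S v) :
    comp G S u = comp G S v := by
  ext w
  rw [mem_comp, mem_comp]
  exact ⟨fun hw => (mem_comp.1 h).trans hw, fun hw => (mem_comp.1 (mem_comp_symm h)).trans hw⟩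

/-- If `T ⊆ S` is closed under adjacency inside `S`, the component in `T` of a vertex of `T` is its
component in `S`. -/
lemma comp_eq_of_closed {G : SimpleGraph V} {S T : Finset V} (hTS : T ⊆ S)
    (hcl : ∀ u ∈ T, ∀ w ∈ S, G.Adj u w → w ∈ T) {v : V} (hv : v ∈ T) :
    comp G T v = comp G S v := by
  ext w
  rw [mem_comp, mem_comp]
  constructor
  · intro h
    exact Relation.ReflTransGen.mono (r := adjIn G T) (p := adjIn G S)
      (fun a b h => ⟨h.1, hTS h.2.1, hTS h.2.2⟩) _ _ h
  · intro h
    have : Relation.ReflTransGen (adjIn G T) v w ∧ w ∈ T := by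
      induction h with
      | refl => exact ⟨.refl, hv⟩
      | tail _ h ih =>
        have := hcl _ ih.2 _ h.2.2 h.1
        exact ⟨ih.1.tail ⟨h.1, ih.2, this⟩, this⟩
    exact this.1

lemma comp_closed {G : SimpleGraph V} {S : Finset V} {v u w : V} (hv : v ∈ S)
    (hu : u ∈ comp G S v) (hw : w ∈ S) (h : G.Adj u w) : w ∈ comp G S v :=
  mem_comp.2 ((mem_comp.1 hu).tail ⟨h, comp_subset hv hu, hw⟩)

/-- The entropy of a block `S` is at most the sum of the entropies of its connected components,
which are conditionally independent. Here a component `U` contributes at most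
`C |U| * ∑ v ∈ U, D v`, and the bound is written as a sum over the vertices of `S`. -/
lemma entF_comp_le {μ : (V → Fin q) → ℝ} (hμ : ∀ σ, 0 ≤ μ σ) (G : SimpleGraph V)
    (hs : ∀ A B : Finset V, Disjoint A B → (∀ a ∈ A, ∀ b ∈ B, ¬ G.Adj a b) → SwapInv μ A B)
    {f : (V → Fin q) → ℝ} (hf : ∀ σ, 0 < f σ) (C : ℕ → ℝ) (D : V → ℝ)
    (hC : ∀ U : Finset V, U.Nonempty →
      entF μ f univ - entF μ f Uᶜ ≤ C U.card * ∑ v ∈ U, D v) (S : Finset V) :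
    entF μ f univ - entF μ f Sᶜ ≤ ∑ v ∈ S, C (comp G S v).card * D v := by
  induction S using Finset.strongInduction with
  | H S ih =>
    rcases S.eq_empty_or_nonempty with rfl | ⟨v, hv⟩
    · simp
    set U := comp G S v with hU
    have hUS : U ⊆ S := comp_subset hv
    have hvU : v ∈ U := self_mem_comp G S v
    have hss : S \ U ⊂ S := sdiff_ssubset hUS ⟨v, hvU⟩
    have hnadj : ∀ a ∈ U, ∀ b ∈ S \ U, ¬ G.Adj a b := fun a ha b hb hab =>
      (mem_sdiff.1 hb).2 (comp_closed hv ha (mem_sdiff.1 hb).1 hab)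
    have h1 := entF_union_le hμ (hs U (S \ U) disjoint_sdiff hnadj) hf
    rw [union_sdiff_of_subset hUS] at h1
    have h2 := hC U ⟨v, hvU⟩
    have h3 := ih _ hss
    have e1 : ∑ w ∈ U, C (comp G S w).card * D w = C U.card * ∑ w ∈ U, D w := by
      rw [mul_sum]
      exact sum_congr rfl fun w hw => by rw [comp_eq_of_mem hw]
    have e2 : ∑ w ∈ S \ U, C (comp G (S \ U) w).card * D w =
        ∑ w ∈ S \ U, C (comp G S w).card * D w := by
      refine sum_congr rfl fun w hw => ?_
      rw [comp_eq_of_closed sdiff_subset ?_ hw]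
      intro a ha b hb hab
      refine mem_sdiff.2 ⟨hb, fun hbU => hnadj b hbU a ha hab.symm⟩
    rw [e2] at h3
    rw [← sum_sdiff hUS, e1]
    linarith

/-- Gibbs distributions have the spatial Markov property. -/
lemma gibbs_swapInv (G : SimpleGraph V) [DecidableRel G.Adj] (A : Fin q → Fin q → ℝ)
    (hA : ∀ i j, A i j = A j i) (h : Fin q → ℝ) {μ : (V → Fin q) → ℝ} {Z : ℝ}
    (hμ : ∀ σ, μ σ = gibbsWeight G A hA h σ / Z) (P Q : Finset V)
    (hPQ : ∀ a ∈ P, ∀ b ∈ Q, ¬ G.Adj a b) : SwapInv μ P Q := by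
  intro σ σ' hσ
  simp only [hμ, div_mul_div_comm]
  congr 1
  simp only [gibbsWeight]
  rw [mul_mul_mul_comm, mul_mul_mul_comm (∏ e ∈ G.edgeFinset, _) _ (∏ e ∈ G.edgeFinset, _)]
  simp only [← prod_mul_distrib]
  have hout : ∀ a ∈ P, ∀ b, G.Adj a b → b ∉ P → σ b = σ' b := by
    intro a ha b hab hb
    refine hσ b fun hb' => ?_
    rcases mem_union.1 hb' with h1 | h1
    · exact hb h1
    · exact hPQ a ha b h1 hab
  congr 1
  · refine prod_congr rfl fun e he => ?_
    induction e using Sym2.ind with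
    | _ u v =>
      rw [SimpleGraph.mem_edgeFinset, SimpleGraph.mem_edgeSet] at he
      simp only [Sym2.lift_mk]
      by_cases hu : u ∈ P
      · by_cases hv : v ∈ P
        · simp only [hu, hv, piecewise_eq_of_mem]
          ring
        · simp only [hu, hv, piecewise_eq_of_mem, piecewise_eq_of_notMem, not_false_eq_true]
          rw [hout u hu v he hv]
          ring
      · by_cases hv : v ∈ P
        · simp only [hu, hv, piecewise_eq_of_mem, piecewise_eq_of_notMem, not_false_eq_true]
          rw [hout v hv u he.symm hu]
          ring
        · simp only [hu, hv, piecewise_eq_of_notMem, not_false_eq_true]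
  · refine prod_congr rfl fun v _ => ?_
    by_cases hv : v ∈ P
    · simp only [hv, piecewise_eq_of_mem]
      ring
    · simp only [hv, piecewise_eq_of_notMem, not_false_eq_true]

end Tensor

/-! ### Crude bounds on a block -/

section Block

variable {V : Type} [Fintype V] [DecidableEq V] {q : ℕ}

/-- Expected squared jump of `g` when the spin at `v` is resampled from `σ`. -/
noncomputable def lineE (μ g : (V → Fin q) → ℝ) (v : V) (σ : V → Fin q) : ℝ :=
  ∑ j, μ (Function.update σ v j) / (∑ i, μ (Function.update σ v i)) *
    (g σ - g (Function.update σ v j)) ^ 2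

lemma sum_line (F : (V → Fin q) → ℝ) (v : V) (z : V → Fin q) :
    ∑ σ : V → Fin q, (if ∀ u, u ≠ v → σ u = z u then F σ else 0) =
      ∑ j, F (Function.update z v j) := by
  rw [← sum_filter]
  symm
  refine sum_nbij' (fun j => Function.update z v j) (fun σ => σ v) ?_ ?_ ?_ ?_ ?_
  · intro j _
    simp only [mem_filter, mem_univ, true_and]
    intro u hu
    rw [Function.update_of_ne hu]
  · simp
  · simp
  · intro σ hσ
    simp only [mem_filter, mem_univ, true_and] at hσ
    funext u
    by_cases hu : u = v
    · subst hu; simp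
    · rw [Function.update_of_ne hu, hσ u hu]
  · simp

lemma lineE_nonneg {μ : (V → Fin q) → ℝ} (hμ : ∀ σ, 0 ≤ μ σ) (g : (V → Fin q) → ℝ) (v : V)
    (σ : V → Fin q) : 0 ≤ lineE μ g v σ :=
  sum_nonneg fun _ _ => mul_nonneg (div_nonneg (hμ _) (sum_nonneg fun _ _ => hμ _)) (sq_nonneg _)

lemma line_pos {μ : (V → Fin q) → ℝ} (hμ : ∀ σ, 0 ≤ μ σ) {σ : V → Fin q} (hσ : 0 < μ σ)
    (v : V) : 0 < ∑ i, μ (Function.update σ v i) :=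
  sum_pos' (fun _ _ => hμ _) ⟨σ v, mem_univ _, by rwa [Function.update_eq_self]⟩

lemma line_prob_ge {μ : (V → Fin q) → ℝ} (hμ : ∀ σ, 0 ≤ μ σ) {b : ℝ}
    (hmb : MarginallyBounded μ b) {σ : V → Fin q} (hσ : 0 < μ σ) (v : V) (j : Fin q)
    (hj : 0 < μ (Function.update σ v j)) :
    b ≤ μ (Function.update σ v j) / ∑ i, μ (Function.update σ v i) := by
  have h := hmb (univ.erase v) (fun h => notMem_erase v univ (by rw [h]; exact mem_univ v)) σ
    (hσ.trans_le (le_prAgree hμ _ σ)) v (notMem_erase v univ) j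
  have e : prAgree μ (univ.erase v) σ = ∑ i, μ (Function.update σ v i) := by
    rw [← sum_line, prAgree]
    refine sum_congr rfl fun σ' _ => ?_
    simp
  rw [condProb, insert_erase (mem_univ v), prAgree_univ, e] at h
  exact h (div_pos hj (line_pos hμ hσ v))

/-- Along a simple path from `x` to `y`, the increments of `g` are controlled by local
oscillations `r z` at the vertices `z`, each used once. -/
lemma abs_sub_le_of_reachable {X : Type*} [Fintype X] (H : SimpleGraph X) (g r : X → ℝ)
    (hr0 : ∀ z, 0 ≤ r z) (hr : ∀ z w, H.Adj z w → |g z - g w| ≤ r z) {x y : X}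
    (hxy : H.Reachable x y) : |g x - g y| ≤ ∑ z, r z := by
  obtain ⟨p, hp⟩ := hxy.exists_isPath
  have h1 : ∀ {x y : X} (p : H.Walk x y), |g x - g y| ≤ (p.support.map r).sum := by
    intro x y p
    induction p with
    | nil => simpa using hr0 _
    | cons h p ih =>
      rw [SimpleGraph.Walk.support_cons, List.map_cons, List.sum_cons]
      exact (abs_sub_le _ _ _).trans (add_le_add (hr _ _ h) ih)
  refine (h1 p).trans ?_
  rw [← List.sum_toFinset r hp.support_nodup]
  exact sum_le_sum_of_subset_of_nonneg (subset_univ _) fun z _ _ => hr0 z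

lemma mul_log_sq_le {u M : ℝ} (hu : 0 < u) (hM : 1 ≤ M) (huM : u ≤ M) :
    u ^ 2 * (2 * Real.log u) - u ^ 2 + 1 ≤ (5 + 8 * Real.log M) * (u - 1) ^ 2 := by
  have hM0 := Real.log_nonneg hM
  -- small `u` by `log u ≤ u - 1`, large `u` by `log u ≤ log M` and `u ≤ 2 (u - 1)`
  rcases le_or_gt u 2 with h | h
  · have h1 := Real.log_le_sub_one_of_pos hu
    have h2 : u ^ 2 * (2 * Real.log u) ≤ u ^ 2 * (2 * (u - 1)) := by gcongr
    have h3 : (2 * u + 1) * (u - 1) ^ 2 ≤ 5 * (u - 1) ^ 2 := by gcongr; linarith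
    nlinarith [mul_nonneg hM0 (sq_nonneg (u - 1))]
  · have h1 := Real.log_le_log hu huM
    have h0 : 0 ≤ Real.log u := Real.log_nonneg (by linarith)
    have h2 : u ^ 2 ≤ 4 * (u - 1) ^ 2 := by nlinarith
    have h3 : u ^ 2 * (2 * Real.log u) ≤ (4 * (u - 1) ^ 2) * (2 * Real.log M) := by gcongr
    nlinarith [sq_nonneg (u - 1)]

/-- Pointwise comparison of entropy with variance of the square root; in the application
`x = √f` and `y` is a conditional average of `√f`. -/
lemma ent_le_var {x y M : ℝ} (hx : 0 < x) (hy : 0 < y) (hM : 1 ≤ M) (hxy : x ≤ M * y) :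
    x ^ 2 * (Real.log (x ^ 2) - Real.log (y ^ 2)) - x ^ 2 + y ^ 2 ≤
      (5 + 8 * Real.log M) * (x - y) ^ 2 := by
  have h := mul_log_sq_le (div_pos hx hy) hM ((div_le_iff₀ hy).2 hxy)
  rw [Real.log_div hx.ne' hy.ne'] at h
  have h2 := mul_le_mul_of_nonneg_right h (sq_nonneg y)
  rw [Real.log_pow, Real.log_pow]
  have e1 : ((x / y) ^ 2 * (2 * (Real.log x - Real.log y)) - (x / y) ^ 2 + 1) * y ^ 2 =
      x ^ 2 * (2 * (Real.log x - Real.log y)) - x ^ 2 + y ^ 2 := by field_simp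
  have e2 : (5 + 8 * Real.log M) * (x / y - 1) ^ 2 * y ^ 2 =
      (5 + 8 * Real.log M) * (x - y) ^ 2 := by field_simp
  rw [e1, e2] at h2
  push_cast
  linarith

/-- Crude Poincaré inequality on the configurations in a block `U` with fixed boundary, from the
connectedness of the feasible configurations. A path from `τ` to `σ` visits each of them at most
once, and there are at most `b^(-|U|)`, each of conditional probability at least `b^|U|`; a single
jump has probability at least `b`. -/
lemma block_poincare_at {μ : (V → Fin q) → ℝ} (hμ : ∀ σ, 0 ≤ μ σ) {b : ℝ} (hb0 : 0 < b)
    (htc : TotallyConnected μ) (hmb : MarginallyBounded μ b) (g : (V → Fin q) → ℝ)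
    {U : Finset V} (hU : U.Nonempty) {τ : V → Fin q} (hτ : 0 < μ τ) :
    ∑ σ, μ σ * (g σ - g τ) ^ 2 * ind Uᶜ τ σ ≤
      (1 / b) ^ (2 * U.card + 1) * ∑ σ, μ σ * (∑ v ∈ U, lineE μ g v σ) * ind Uᶜ τ σ := by
  set W := Uᶜ with hW
  set P := prAgree μ W τ with hP
  have hP0 : 0 < P := hτ.trans_le (le_prAgree hμ W τ)
  let Ω : Finset (V → Fin q) := univ.filter fun σ => 0 < μ σ ∧ ∀ v ∈ W, σ v = τ v
  have hΩ : ∀ σ, σ ∈ Ω ↔ 0 < μ σ ∧ ∀ v ∈ W, σ v = τ v := fun σ => by simp [Ω]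
  have hΩind : ∀ σ ∈ Ω, ind W τ σ = 1 := fun σ hσ => by
    unfold ind; rw [if_pos ((hΩ σ).1 hσ).2]
  have hge : ∀ σ ∈ Ω, b ^ U.card * P ≤ μ σ := by
    intro σ hσ
    have h := prAgree_union_ge hμ hb0 hmb W σ ((hΩ σ).1 hσ).1 U disjoint_compl_right
    rw [hW, union_compl, prAgree_univ, ← hW, depOn_prAgree μ W σ τ ((hΩ σ).1 hσ).2] at h
    exact h
  have hsumΩ : ∀ F : (V → Fin q) → ℝ, ∑ σ, μ σ * F σ * ind W τ σ = ∑ σ ∈ Ω, μ σ * F σ := by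
    intro F
    rw [← sum_subset (subset_univ Ω)]
    · exact sum_congr rfl fun σ hσ => by rw [hΩind σ hσ, mul_one]
    · intro σ _ hσ
      by_cases h1 : ∀ v ∈ W, σ v = τ v
      · have : ¬ 0 < μ σ := fun h => hσ ((hΩ σ).2 ⟨h, h1⟩)
        rw [le_antisymm (not_lt.1 this) (hμ σ)]; ring
      · have : ind W τ σ = 0 := by unfold ind; rw [if_neg h1]
        rw [this, mul_zero]
  have hPΩ : P = ∑ σ ∈ Ω, μ σ := by
    have := hsumΩ fun _ => 1
    simp only [mul_one] at this
    rw [hP, prAgree_eq, this]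
  have hbU : 0 < b ^ U.card := pow_pos hb0 _
  have hcard : b ^ U.card * Ω.card ≤ 1 := by
    have h1 : ∑ σ ∈ Ω, b ^ U.card * P ≤ P := by
      conv_rhs => rw [hPΩ]
      exact sum_le_sum hge
    rw [sum_const, nsmul_eq_mul] at h1
    refine le_of_mul_le_mul_right ?_ hP0
    linarith
  let φ : (V → Fin q) → ℝ := fun z => if z ∈ Ω then ∑ v ∈ U, ∑ j,
    (if Function.update z v j ∈ Ω then (g z - g (Function.update z v j)) ^ 2 else 0) else 0
  have hφ0 : ∀ z, 0 ≤ φ z := fun z => by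
    simp only [φ]
    split_ifs
    · exact sum_nonneg fun v _ => sum_nonneg fun j _ => by split_ifs <;> positivity
    · exact le_rfl
  -- single jumps inside the block are charged to their starting point
  have hjump : ∀ z ∈ Ω, ∀ w ∈ Ω, HammingAdj z w → |g z - g w| ≤ √(φ z) := by
    rintro z hz w hw ⟨v, hv, huniq⟩
    have hvU : v ∈ U := by
      by_contra h
      have hvW : v ∈ W := by rw [hW, mem_compl]; exact h
      exact hv (by rw [((hΩ z).1 hz).2 v hvW, ((hΩ w).1 hw).2 v hvW])
    have hwu : Function.update z v (w v) = w := by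
      funext u
      by_cases hu : u = v
      · subst hu; simp
      · rw [Function.update_of_ne hu]
        by_contra h
        exact hu (huniq u h)
    apply Real.le_sqrt_of_sq_le
    rw [sq_abs]
    simp only [φ]
    rw [if_pos hz]
    have h1 : (g z - g w) ^ 2 = if Function.update z v (w v) ∈ Ω then
        (g z - g (Function.update z v (w v))) ^ 2 else 0 := by rw [hwu, if_pos hw]
    rw [h1]
    refine (single_le_sum (f := fun j => if Function.update z v j ∈ Ω then
      (g z - g (Function.update z v j)) ^ 2 else 0)
      (fun j _ => by split_ifs <;> positivity) (mem_univ (w v))).trans ?_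
    exact single_le_sum (f := fun v => ∑ j, if Function.update z v j ∈ Ω then
      (g z - g (Function.update z v j)) ^ 2 else 0)
      (fun v _ => sum_nonneg fun j _ => by split_ifs <;> positivity) hvU
  let H : SimpleGraph (V → Fin q) :=
    { Adj := fun z w => HammingAdj z w ∧ z ∈ Ω ∧ w ∈ Ω
      symm := ⟨fun z w h => ⟨by
        obtain ⟨v, hv, hu⟩ := h.1
        exact ⟨v, Ne.symm hv, fun y hy => hu y (Ne.symm hy)⟩, h.2.2, h.2.1⟩⟩
      loopless := ⟨fun z h => by
        obtain ⟨v, hv, _⟩ := h.1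
        exact hv rfl⟩ }
  have hτΩ : τ ∈ Ω := (hΩ τ).2 ⟨hτ, fun _ _ => rfl⟩
  have hreach : ∀ σ ∈ Ω, H.Reachable τ σ := by
    intro σ hσ
    have h := htc U hU τ hP0 τ σ hτ (fun _ _ => rfl) ((hΩ σ).1 hσ).1 ((hΩ σ).1 hσ).2
    have : H.Reachable τ σ ∧ σ ∈ Ω := by
      clear hσ
      induction h with
      | refl => exact ⟨.refl _, hτΩ⟩
      | tail _ h ih =>
        have hc := (hΩ _).2 h.2
        exact ⟨ih.1.trans (SimpleGraph.Adj.reachable ⟨h.1, ih.2, hc⟩), hc⟩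
    exact this.1
  set B := ∑ z ∈ Ω, φ z with hB
  have hosc : ∀ σ ∈ Ω, (g σ - g τ) ^ 2 ≤ Ω.card * B := by
    intro σ hσ
    have h1 := abs_sub_le_of_reachable H g (fun z => √(φ z)) (fun z => Real.sqrt_nonneg _)
      (fun z w h => hjump z h.2.1 w h.2.2 h.1) (hreach σ hσ)
    have h2 : ∑ z, √(φ z) = ∑ z ∈ Ω, √(φ z) := by
      symm
      refine sum_subset (subset_univ Ω) fun z _ hz => ?_
      simp only [φ]
      rw [if_neg hz, Real.sqrt_zero]
    rw [h2] at h1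
    have h3 := sq_sum_le_card_mul_sum_sq (s := Ω) (f := fun z => √(φ z))
    simp only [Real.sq_sqrt (hφ0 _)] at h3
    calc (g σ - g τ) ^ 2 = |g τ - g σ| ^ 2 := by rw [sq_abs]; ring
      _ ≤ _ := pow_le_pow_left₀ (abs_nonneg _) h1 2
      _ ≤ _ := h3
  have hB0 : 0 ≤ B := sum_nonneg fun z _ => hφ0 z
  have hφle : ∀ z ∈ Ω, b * (b ^ U.card * P) * φ z ≤ μ z * ∑ v ∈ U, lineE μ g v z := by
    intro z hz
    have h1 : b * φ z ≤ ∑ v ∈ U, lineE μ g v z := by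
      simp only [φ]
      rw [if_pos hz, mul_sum]
      refine sum_le_sum fun v _ => ?_
      rw [mul_sum, lineE]
      refine sum_le_sum fun j _ => ?_
      split_ifs with hj
      · exact mul_le_mul_of_nonneg_right (line_prob_ge hμ hmb ((hΩ z).1 hz).1 v j
          ((hΩ _).1 hj).1) (sq_nonneg _)
      · rw [mul_zero]
        exact mul_nonneg (div_nonneg (hμ _) (sum_nonneg fun _ _ => hμ _)) (sq_nonneg _)
    calc _ = (b ^ U.card * P) * (b * φ z) := by ring
      _ ≤ μ z * ∑ v ∈ U, lineE μ g v z := mul_le_mul (hge z hz) h1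
          (mul_nonneg hb0.le (hφ0 z)) (hμ z)
  rw [hsumΩ, hsumΩ]
  set E := ∑ σ ∈ Ω, μ σ * ∑ v ∈ U, lineE μ g v σ with hE
  have hBE : b * (b ^ U.card * P) * B ≤ E := by
    rw [hB, mul_sum]
    exact sum_le_sum hφle
  have h1 : ∑ σ ∈ Ω, μ σ * (g σ - g τ) ^ 2 ≤ P * (Ω.card * B) := by
    conv_rhs => rw [hPΩ, sum_mul]
    exact sum_le_sum fun σ hσ => mul_le_mul_of_nonneg_left (hosc σ hσ) (hμ σ)
  refine h1.trans ?_
  have hb2 : 0 < b ^ (2 * U.card + 1) := pow_pos hb0 _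
  rw [one_div, inv_pow, ← div_eq_inv_mul, le_div_iff₀ hb2]
  calc P * (Ω.card * B) * b ^ (2 * U.card + 1)
      = (b ^ U.card * Ω.card) * (b * (b ^ U.card * P) * B) := by ring
    _ ≤ 1 * (b * (b ^ U.card * P) * B) := by
        refine mul_le_mul_of_nonneg_right hcard (by positivity)
    _ ≤ E := by rw [one_mul]; exact hBE

/-- The averaged form of the Poincaré inequality on a block. -/
lemma block_poincare {μ : (V → Fin q) → ℝ} (hμ : ∀ σ, 0 ≤ μ σ) {b : ℝ} (hb0 : 0 < b)
    (htc : TotallyConnected μ) (hmb : MarginallyBounded μ b) (g : (V → Fin q) → ℝ)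
    {U : Finset V} (hU : U.Nonempty) :
    ∑ σ, μ σ * (g σ - cE μ Uᶜ g σ) ^ 2 ≤
      (1 / b) ^ (2 * U.card + 1) * ∑ v ∈ U, ∑ σ, μ σ * lineE μ g v σ := by
  have e1 : ∑ v ∈ U, ∑ σ, μ σ * lineE μ g v σ = ∑ σ, μ σ * ∑ v ∈ U, lineE μ g v σ := by
    rw [sum_comm]
    exact sum_congr rfl fun σ _ => by rw [mul_sum]
  rw [e1, ← sum_cE hμ Uᶜ (fun σ => (g σ - cE μ Uᶜ g σ) ^ 2),
    ← sum_cE hμ Uᶜ (fun σ => ∑ v ∈ U, lineE μ g v σ), mul_sum]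
  refine sum_le_sum fun τ _ => ?_
  rcases (hμ τ).eq_or_lt with h | h
  · rw [← h]; simp
  rw [mul_left_comm]
  refine mul_le_mul_of_nonneg_left ?_ h.le
  have hp := h.trans_le (le_prAgree hμ Uᶜ τ)
  have h1 := block_poincare_at hμ hb0 htc hmb g hU h
  have h2 : cE μ Uᶜ (fun σ => (g σ - cE μ Uᶜ g σ) ^ 2) τ ≤
      (∑ σ, μ σ * (g σ - g τ) ^ 2 * ind Uᶜ τ σ) / prAgree μ Uᶜ τ := by
    -- the conditional mean minimizes the mean square distance to a constant
    set m := cE μ Uᶜ g τ with hm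
    have hc : cE μ Uᶜ (fun σ => (g σ - cE μ Uᶜ g σ) ^ 2) τ =
        cE μ Uᶜ (fun σ => (g σ - m) ^ 2) τ :=
      cE_congr fun σ hσ => by rw [depOn_cE μ Uᶜ g σ τ hσ]
    rw [hc, cE]
    refine div_le_div_of_nonneg_right ?_ hp.le
    have hmp : ∑ σ, μ σ * g σ * ind Uᶜ τ σ = m * ∑ σ, μ σ * ind Uᶜ τ σ := by
      rw [hm, cE, ← prAgree_eq μ, div_mul_cancel₀ _ hp.ne']
    have e : ∑ σ, μ σ * (g σ - g τ) ^ 2 * ind Uᶜ τ σ =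
        ∑ σ, μ σ * (g σ - m) ^ 2 * ind Uᶜ τ σ + (m - g τ) ^ 2 * ∑ σ, μ σ * ind Uᶜ τ σ := by
      have e' : ∑ σ, μ σ * (g σ - g τ) ^ 2 * ind Uᶜ τ σ =
        ∑ σ, μ σ * (g σ - m) ^ 2 * ind Uᶜ τ σ + 2 * (m - g τ) * ∑ σ, μ σ * g σ * ind Uᶜ τ σ
          - (m ^ 2 - g τ ^ 2) * ∑ σ, μ σ * ind Uᶜ τ σ := by
        rw [mul_sum, mul_sum, ← sum_add_distrib, ← sum_sub_distrib]
        exact sum_congr rfl fun σ _ => by ring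
      rw [e', hmp]; ring
    rw [e, ← prAgree_eq μ]
    have := mul_nonneg (sq_nonneg (m - g τ)) hp.le
    linarith
  refine h2.trans ?_
  rw [cE, ← mul_div_assoc]
  exact div_le_div_of_nonneg_right h1 hp.le

/-- Crude modified log-Sobolev type bound for a block, with a constant exponential in its
size. -/
lemma block_ent_le {μ : (V → Fin q) → ℝ} (hμ : ∀ σ, 0 ≤ μ σ) {b : ℝ} (hb0 : 0 < b) (hb1 : b < 1)
    (htc : TotallyConnected μ) (hmb : MarginallyBounded μ b) {f : (V → Fin q) → ℝ}
    (hf : ∀ σ, 0 < f σ) {U : Finset V} (hU : U.Nonempty) :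
    entF μ f univ - entF μ f Uᶜ ≤
      (5 + 8 * U.card * Real.log (1 / b)) * (1 / b) ^ (2 * U.card + 1) *
        ∑ v ∈ U, ∑ σ, μ σ * lineE μ (fun σ => √(f σ)) v σ := by
  set g : (V → Fin q) → ℝ := fun σ => √(f σ) with hg
  set W := Uᶜ with hW
  have hg0 : ∀ σ, 0 < g σ := fun σ => Real.sqrt_pos.2 (hf σ)
  have hgf : ∀ σ, g σ ^ 2 = f σ := fun σ => Real.sq_sqrt (hf σ).le
  have hd : DepOn W (fun σ => Real.log (cE μ W g σ ^ 2)) := fun σ τ h => by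
    simp only [depOn_cE μ W g σ τ h]
  have h1 : entF μ f univ - entF μ f W ≤
      ∑ σ, μ σ * (f σ * (Real.log (f σ) - Real.log (cE μ W g σ ^ 2)) - f σ
        + cE μ W g σ ^ 2) := by
    have e1 : entF μ f univ = ∑ σ, μ σ * (f σ * Real.log (f σ)) := by
      refine sum_congr rfl fun σ _ => ?_
      rcases (hμ σ).eq_or_lt with h | h
      · rw [← h]; simp
      · rw [cE_univ μ f σ h]
    have e2 : ∑ σ, μ σ * (f σ * (Real.log (f σ) - Real.log (cE μ W g σ ^ 2)) - f σ
        + cE μ W g σ ^ 2) = entF μ f univ - ∑ σ, μ σ * (cE μ W f σ *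
          Real.log (cE μ W g σ ^ 2)) - ∑ σ, μ σ * cE μ W f σ
          + ∑ σ, μ σ * cE μ W g σ ^ 2 := by
      rw [sum_cE_mul hμ W f hd, sum_cE hμ W f, e1, ← sum_sub_distrib, ← sum_sub_distrib,
        ← sum_add_distrib]
      exact sum_congr rfl fun σ _ => by ring
    rw [e2, entF, entF]
    have h3 : 0 ≤ ∑ σ, μ σ * (cE μ W f σ * (Real.log (cE μ W f σ) -
        Real.log (cE μ W g σ ^ 2)) - cE μ W f σ + cE μ W g σ ^ 2) := by
      refine sum_nonneg fun σ _ => ?_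
      rcases (hμ σ).eq_or_lt with h | h
      · rw [← h]; simp
      · refine mul_nonneg h.le ?_
        have := mul_log_ge (cE_pos hμ W hf σ h) (pow_pos (cE_pos hμ W hg0 σ h) 2)
        linarith
    simp only [mul_add, mul_sub, sum_add_distrib, sum_sub_distrib] at h3
    linarith
  have hM : (1 : ℝ) ≤ (1 / b) ^ U.card := one_le_pow₀ ((one_le_div hb0).2 hb1.le)
  have h2 : ∀ σ, μ σ * (f σ * (Real.log (f σ) - Real.log (cE μ W g σ ^ 2)) - f σ
        + cE μ W g σ ^ 2) ≤
      (5 + 8 * U.card * Real.log (1 / b)) * (μ σ * (g σ - cE μ W g σ) ^ 2) := by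
    intro σ
    rcases (hμ σ).eq_or_lt with h | h
    · rw [← h]; simp
    rw [mul_left_comm]
    refine mul_le_mul_of_nonneg_left ?_ h.le
    have h3 : g σ ≤ (1 / b) ^ U.card * cE μ W g σ := by
      have a1 := cE_mul_prAgree_anti hμ (subset_univ W) (fun σ => (hg0 σ).le) σ h
      rw [cE_univ μ g σ h, prAgree_univ] at a1
      have a2 := prAgree_union_ge hμ hb0 hmb W σ h U disjoint_compl_right
      rw [hW, union_compl, prAgree_univ, ← hW] at a2
      have a3 := h.trans_le (le_prAgree hμ W σ)
      have a4 := mul_le_mul_of_nonneg_left a2 (hg0 σ).le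
      have a5 : g σ * b ^ U.card ≤ cE μ W g σ := by
        refine le_of_mul_le_mul_right ?_ a3
        linarith
      rw [one_div, inv_pow, ← div_eq_inv_mul, le_div_iff₀ (pow_pos hb0 _)]
      exact a5
    have h4 := ent_le_var (hg0 σ) (cE_pos hμ W hg0 σ h) hM h3
    rw [hgf, show Real.log ((1 / b) ^ U.card) = U.card * Real.log (1 / b) from Real.log_pow _ _,
      ← mul_assoc] at h4
    exact h4
  refine h1.trans ((sum_le_sum fun σ _ => h2 σ).trans ?_)
  rw [← mul_sum, mul_assoc (5 + 8 * (U.card : ℝ) * Real.log (1 / b))]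
  refine mul_le_mul_of_nonneg_left (block_poincare hμ hb0 htc hmb g hU) ?_
  have : 0 ≤ Real.log (1 / b) := Real.log_nonneg ((one_le_div hb0).2 hb1.le)
  positivity

end Block

/-! ### Percolation estimate for component sizes -/

section Percolation

variable {V : Type} [Fintype V] [DecidableEq V]

lemma choose_sub_le {n l : ℕ} (hl : l ≤ n) {k : ℕ} (hk : k ≤ l) :
    (n - k).choose (l - k) * n ^ k ≤ l ^ k * n.choose l := by
  induction k with
  | zero => simp
  | succ k ih =>
    have ih := ih (by omega)
    obtain ⟨N, hN⟩ : ∃ N, n - k = N + 1 := ⟨n - k - 1, by omega⟩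
    obtain ⟨L, hL⟩ : ∃ L, l - k = L + 1 := ⟨l - k - 1, by omega⟩
    rw [show n - (k + 1) = N by omega, show l - (k + 1) = L by omega]
    rw [hN, hL] at ih
    have h1 := Nat.add_one_mul_choose_eq N L
    have h2 : n * (L + 1) ≤ l * (N + 1) := by
      have e1 : n = N + 1 + k := by omega
      have e2 : l = L + 1 + k := by omega
      have : L ≤ N := by omega
      rw [e1, e2]; nlinarith
    have h3 : N.choose L * n ≤ l * (N + 1).choose (L + 1) := by
      refine Nat.le_of_mul_le_mul_left (c := N + 1) ?_ (by omega)
      calc (N + 1) * (N.choose L * n) = (n * (L + 1)) * (N + 1).choose (L + 1) := by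
            rw [← mul_assoc, h1]; ring
        _ ≤ (l * (N + 1)) * (N + 1).choose (L + 1) := Nat.mul_le_mul_right _ h2
        _ = _ := by ring
    calc N.choose L * n ^ (k + 1) = (N.choose L * n) * n ^ k := by ring
      _ ≤ (l * (N + 1).choose (L + 1)) * n ^ k := Nat.mul_le_mul_right _ h3
      _ = l * ((N + 1).choose (L + 1) * n ^ k) := by ring
      _ ≤ l * (l ^ k * n.choose l) := Nat.mul_le_mul_left _ ih
      _ = _ := by ring

/-- A uniformly random `l`-subset contains a given `k`-set with probability at most
`(l/n)^k`. -/
lemma card_supersets_le (U : Finset V) {l : ℕ} (hl : l ≤ Fintype.card V)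
    (hn : 0 < Fintype.card V) :
    (((powersetCard l (univ : Finset V)).filter fun S => U ⊆ S).card : ℝ) ≤
      ((l : ℝ) / Fintype.card V) ^ U.card * ((Fintype.card V).choose l : ℝ) := by
  by_cases hU : U.card ≤ l
  · have h1 : ((powersetCard l (univ : Finset V)).filter fun S => U ⊆ S).card ≤
        (Fintype.card V - U.card).choose (l - U.card) := by
      rw [← card_compl, ← card_powersetCard]
      refine card_le_card_of_injOn (fun S => S \ U) ?_ ?_
      · intro S hS
        simp only [coe_filter, mem_powersetCard, subset_univ, true_and, Set.mem_ofPred_eq] at hS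
        rw [mem_coe, mem_powersetCard, card_sdiff_of_subset hS.2, hS.1]
        refine ⟨fun x hx => ?_, rfl⟩
        rw [mem_compl]; exact (mem_sdiff.1 hx).2
      · intro S hS S' hS' h
        simp only [coe_filter, mem_powersetCard, subset_univ, true_and, Set.mem_ofPred_eq] at hS hS'
        rw [← sdiff_union_of_subset hS.2, ← sdiff_union_of_subset hS'.2]
        exact congrArg (· ∪ U) h
    have h2 := choose_sub_le hl hU
    have hn' : (0 : ℝ) < (Fintype.card V : ℝ) ^ U.card := by positivity
    rw [div_pow, div_mul_eq_mul_div, le_div_iff₀ hn']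
    calc _ ≤ ((Fintype.card V - U.card).choose (l - U.card) : ℝ) *
          (Fintype.card V : ℝ) ^ U.card := by gcongr
      _ ≤ _ := by exact_mod_cast h2
  · rw [filter_eq_empty_iff.2]
    · simp only [card_empty, Nat.cast_zero]; positivity
    · intro S hS h
      rw [mem_powersetCard] at hS
      exact hU (hS.2 ▸ card_le_card h)

/-- Under Bernoulli percolation with parameter `p = 1/(2Δ)`, a connected set `U ∋ v` is the
cluster of `v` with probability at least `(4Δ)^(-|U|)`: it suffices that `U` is open and its
outer boundary, of size at most `Δ|U|`, is closed. -/
lemma cluster_prob_ge (G : SimpleGraph V) [DecidableRel G.Adj] {Δ : ℕ} (hΔ : 1 ≤ Δ)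
    (hdeg : ∀ v, G.degree v ≤ Δ) (v : V) {U : Finset V} (hvU : v ∈ U) (hU : comp G U v = U) :
    (1 / (4 * (Δ : ℝ))) ^ U.card ≤
      ∑ S ∈ univ.filter fun S => comp G S v = U,
        (1 / (2 * (Δ : ℝ))) ^ S.card * (1 - 1 / (2 * (Δ : ℝ))) ^ (Fintype.card V - S.card) := by
  have hΔ' : (1 : ℝ) ≤ Δ := by exact_mod_cast hΔ
  set p : ℝ := 1 / (2 * (Δ : ℝ)) with hp
  have hp0 : 0 < p := by rw [hp]; positivity
  have hpΔ : Δ * p = 1 / 2 := by rw [hp]; field_simp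
  have hp1 : p ≤ 1 / 2 := by nlinarith
  set N : Finset V := univ.filter fun w => w ∉ U ∧ ∃ u ∈ U, G.Adj u w with hN
  have hNc : N.card ≤ Δ * U.card := by
    have h1 : N ⊆ U.biUnion fun u => G.neighborFinset u := by
      intro w hw
      simp only [hN, mem_filter, mem_univ, true_and] at hw
      obtain ⟨_, u, hu, h⟩ := hw
      exact mem_biUnion.2 ⟨u, hu, by simpa using h⟩
    refine (card_le_card h1).trans ((card_biUnion_le_card_mul _ _ Δ fun u _ => ?_).trans_eq
      (mul_comm _ _))
    rw [G.card_neighborFinset_eq_degree]; exact hdeg u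
  have hUN : Disjoint U N := by
    rw [disjoint_left]; intro w hw hw'
    exact (mem_filter.1 hw').2.1 hw
  set R : Finset V := (U ∪ N)ᶜ with hR
  have hcard : U.card + N.card + R.card = Fintype.card V := by
    rw [← card_union_of_disjoint hUN, hR, card_add_card_compl]
  have hTU : ∀ T ∈ R.powerset, Disjoint T U := by
    intro T hT
    rw [disjoint_left]; intro w hw hw'
    exact mem_compl.1 (mem_powerset.1 hT hw) (mem_union_left _ hw')
  have hinj : Set.InjOn (fun T => T ∪ U) (R.powerset : Set (Finset V)) := by
    intro T hT T' hT' h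
    have h' : T ∪ U = T' ∪ U := h
    rw [← union_sdiff_cancel_right (hTU T hT), h', union_sdiff_cancel_right (hTU T' hT')]
  have himg : R.powerset.image (fun T => T ∪ U) ⊆ univ.filter fun S => comp G S v = U := by
    intro S hS
    obtain ⟨T, hT, rfl⟩ := mem_image.1 hS
    rw [mem_filter]
    refine ⟨mem_univ _, ?_⟩
    rw [← comp_eq_of_closed (T := U) subset_union_right ?_ hvU, hU]
    intro u hu w hw huw
    rcases mem_union.1 hw with hw | hw
    · by_contra hwU
      exact mem_compl.1 (mem_powerset.1 hT hw) (mem_union_right _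
        (mem_filter.2 ⟨mem_univ _, hwU, u, hu, huw⟩))
    · exact hw
  calc (1 / (4 * (Δ : ℝ))) ^ U.card ≤ (p * (1 - p) ^ Δ) ^ U.card := by
        refine pow_le_pow_left₀ (by positivity) ?_ _
        have h1 := one_add_mul_le_pow (a := -p) (by linarith) Δ
        have h2 : (1 : ℝ) / 2 ≤ (1 - p) ^ Δ := by
          rw [sub_eq_add_neg]; refine le_trans ?_ h1; linarith
        calc (1 / (4 * (Δ : ℝ))) = p * (1 / 2) := by rw [hp]; field_simp; norm_num
          _ ≤ _ := by gcongr
    _ = p ^ U.card * (1 - p) ^ (Δ * U.card) := by rw [mul_pow, ← pow_mul]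
    _ ≤ p ^ U.card * (1 - p) ^ N.card := by
        gcongr _ * ?_
        exact pow_le_pow_of_le_one (by linarith) (by linarith) hNc
    _ = ∑ T ∈ R.powerset, p ^ (T ∪ U).card * (1 - p) ^ (Fintype.card V - (T ∪ U).card) := by
        have h1 := sum_pow_mul_eq_add_pow p (1 - p) R
        rw [add_sub_cancel, one_pow] at h1
        have h3 : p ^ U.card * (1 - p) ^ N.card = p ^ U.card * (1 - p) ^ N.card *
            ∑ T ∈ R.powerset, p ^ T.card * (1 - p) ^ (R.card - T.card) := by rw [h1, mul_one]
        rw [h3, mul_sum]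
        refine sum_congr rfl fun T hT => ?_
        have h2 := card_le_card (mem_powerset.1 hT)
        rw [card_union_of_disjoint (hTU T hT),
          show Fintype.card V - (T.card + U.card) = N.card + (R.card - T.card) by omega]
        ring
    _ = ∑ S ∈ R.powerset.image (fun T => T ∪ U),
          p ^ S.card * (1 - p) ^ (Fintype.card V - S.card) := by
        rw [sum_image hinj]
    _ ≤ _ := by
        refine sum_le_sum_of_subset_of_nonneg himg fun S _ _ => ?_
        have : 0 ≤ 1 - p := by linarith
        positivity

/-- In a uniformly random `l`-subset the component of `v` is small: it equals `U` with
probability at most `(4Δl/n)^|U|` times the probability that `U` is the percolation cluster of `v`,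
and the latter probabilities sum to `1`. -/
lemma sum_comp_le (G : SimpleGraph V) [DecidableRel G.Adj] {Δ : ℕ} (hΔ : 1 ≤ Δ)
    (hdeg : ∀ v, G.degree v ≤ Δ) (v : V) {l : ℕ} (hl : l ≤ Fintype.card V)
    {C : ℕ → ℝ} (hC : ∀ k, 0 ≤ C k) {M : ℝ}
    (hM : ∀ k, 1 ≤ k → C k * ((l : ℝ) / Fintype.card V * (4 * Δ)) ^ k ≤ M) :
    ∑ S ∈ (powersetCard l (univ : Finset V)).filter (fun S => v ∈ S), C (comp G S v).card ≤
      M * ((Fintype.card V).choose l : ℝ) := by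
  have hn : 0 < Fintype.card V := Fintype.card_pos_iff.2 ⟨v⟩
  have hΔ' : (1 : ℝ) ≤ Δ := by exact_mod_cast hΔ
  have hM0 : 0 ≤ M := (mul_nonneg (hC 1) (by positivity)).trans (hM 1 le_rfl)
  set p : ℝ := 1 / (2 * (Δ : ℝ)) with hp
  have hp0 : 0 < p := by rw [hp]; positivity
  have hp1 : 0 ≤ 1 - p := by
    rw [hp, sub_nonneg, div_le_one (by positivity)]; linarith
  have htot : ∑ S : Finset V, p ^ S.card * (1 - p) ^ (Fintype.card V - S.card) = 1 := by
    have h1 := sum_pow_mul_eq_add_pow p (1 - p) (univ : Finset V)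
    rwa [add_sub_cancel, one_pow, powerset_univ, card_univ] at h1
  rw [← sum_fiberwise_of_maps_to (s := (univ : Finset (Finset V))) (t := univ)
      (g := fun S => comp G S v) (fun _ _ => mem_univ _)] at htot
  rw [← sum_fiberwise_of_maps_to (t := univ) (g := fun S => comp G S v) (fun _ _ => mem_univ _),
    ← mul_one (M * _), ← htot, mul_sum]
  refine sum_le_sum fun U _ => ?_
  by_cases hE : (((powersetCard l (univ : Finset V)).filter (fun S => v ∈ S)).filter
      fun S => comp G S v = U) = ∅
  · rw [hE, sum_empty]
    have : 0 ≤ ∑ S ∈ univ.filter (fun S => comp G S v = U),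
        p ^ S.card * (1 - p) ^ (Fintype.card V - S.card) :=
      sum_nonneg fun S _ => by positivity
    positivity
  · obtain ⟨S₀, hS₀⟩ := nonempty_iff_ne_empty.2 hE
    simp only [mem_filter] at hS₀
    obtain ⟨⟨_, hvS₀⟩, hUS₀⟩ := hS₀
    have hvU : v ∈ U := hUS₀ ▸ self_mem_comp G S₀ v
    have hUU : comp G U v = U := by
      have h1 := comp_eq_of_closed (G := G) (T := comp G S₀ v) (comp_subset hvS₀)
        (fun u hu w hw huw => comp_closed hvS₀ hu hw huw) (self_mem_comp G S₀ v)
      rwa [hUS₀] at h1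
    have h1 : ∑ S ∈ ((powersetCard l (univ : Finset V)).filter (fun S => v ∈ S)).filter
        (fun S => comp G S v = U), C (comp G S v).card ≤
        C U.card * (((l : ℝ) / Fintype.card V) ^ U.card * ((Fintype.card V).choose l : ℝ)) := by
      rw [sum_congr rfl (g := fun _ => C U.card) fun S hS => by rw [(mem_filter.1 hS).2],
        sum_const, nsmul_eq_mul, mul_comm]
      refine mul_le_mul_of_nonneg_left (le_trans ?_ (card_supersets_le U hl hn)) (hC _)
      norm_cast
      refine card_le_card fun S hS => ?_
      simp only [mem_filter] at hS ⊢
      exact ⟨hS.1.1, hS.2 ▸ comp_subset hS.1.2⟩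
    have h2 := cluster_prob_ge G hΔ hdeg v hvU hUU
    rw [← hp] at h2
    refine h1.trans ?_
    have h3 := hM U.card (card_pos.2 ⟨v, hvU⟩)
    calc _ = (C U.card * ((l : ℝ) / Fintype.card V * (4 * Δ)) ^ U.card) *
          ((Fintype.card V).choose l : ℝ) * (1 / (4 * (Δ : ℝ))) ^ U.card := by
          rw [mul_pow, one_div, inv_pow]; field_simp
      _ ≤ _ := by gcongr

end Percolation

/-! ### The log-Sobolev inequality -/

section Main

variable {V : Type} [Fintype V] [DecidableEq V] {q : ℕ}

lemma gibbsWeight_nonneg (G : SimpleGraph V) [DecidableRel G.Adj] (A : Fin q → Fin q → ℝ)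
    (hA0 : ∀ i j, 0 ≤ A i j) (hA : ∀ i j, A i j = A j i) (h : Fin q → ℝ) (hh : ∀ i, 0 < h i)
    (σ : V → Fin q) : 0 ≤ gibbsWeight G A hA h σ := by
  refine mul_nonneg (prod_nonneg fun e _ => ?_) (prod_nonneg fun v _ => (hh _).le)
  induction e with
  | _ u v => exact hA0 _ _

lemma two_mul_sq_sqrt_sub_le {a c : ℝ} (ha : 0 < a) (hc : 0 < c) :
    2 * (√a - √c) ^ 2 ≤ (a - c) * (Real.log a - Real.log c) := by
  have h1 := sq_sqrt_sub_le ha hc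
  have h2 := sq_sqrt_sub_le hc ha
  nlinarith

/-- The Dirichlet form of `(f, log f)` dominates that of `(√f, √f)`, by
`two_mul_sq_sqrt_sub_le`. -/
lemma sum_lineE_le_dirichlet {μ : (V → Fin q) → ℝ} (hμ : ∀ σ, 0 ≤ μ σ)
    {f : (V → Fin q) → ℝ} (hf : ∀ σ, 0 < f σ) (hn : 0 < Fintype.card V) :
    ∑ v, ∑ σ, μ σ * lineE μ (fun σ => √(f σ)) v σ ≤
      Fintype.card V * glauberDirichlet μ f (fun σ => Real.log (f σ)) := by
  have hn' : (0 : ℝ) < Fintype.card V := by exact_mod_cast hn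
  have e : glauberDirichlet μ f (fun σ => Real.log (f σ)) =
      (1 / 2) * ((Fintype.card V : ℝ)⁻¹ * ∑ v, ∑ σ, μ σ * ∑ j,
        μ (Function.update σ v j) / (∑ i, μ (Function.update σ v i)) *
          ((f σ - f (Function.update σ v j)) *
            (Real.log (f σ) - Real.log (f (Function.update σ v j))))) := by
    rw [glauberDirichlet]
    congr 1
    rw [sum_comm (s := (univ : Finset V)), mul_sum]
    refine sum_congr rfl fun σ _ => ?_
    rw [← mul_sum, mul_left_comm, mul_sum, ← mul_sum]
    rw [show ∑ σ', μ σ * glauberMatrix μ σ σ' * (f σ - f σ') *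
        (Real.log (f σ) - Real.log (f σ')) = μ σ * ∑ σ', glauberMatrix μ σ σ' * (f σ - f σ') *
        (Real.log (f σ) - Real.log (f σ')) from by
      rw [mul_sum]; exact sum_congr rfl fun _ _ => by ring]
    congr 1
    simp only [glauberMatrix, Matrix.of_apply, mul_sum, sum_mul]
    rw [sum_comm]
    refine sum_congr rfl fun v _ => ?_
    have h1 := sum_line (fun σ' => (Fintype.card V : ℝ)⁻¹ *
      (μ σ' / (∑ i, μ (Function.update σ v i)) * ((f σ - f σ') *
        (Real.log (f σ) - Real.log (f σ'))))) v σ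
    rw [← h1]
    refine sum_congr rfl fun σ' _ => ?_
    split_ifs <;> ring
  rw [e]
  have h2 : 2 * ∑ v, ∑ σ, μ σ * lineE μ (fun σ => √(f σ)) v σ ≤ ∑ v, ∑ σ, μ σ * ∑ j,
        μ (Function.update σ v j) / (∑ i, μ (Function.update σ v i)) *
          ((f σ - f (Function.update σ v j)) *
            (Real.log (f σ) - Real.log (f (Function.update σ v j)))) := by
    rw [mul_sum]
    refine sum_le_sum fun v _ => ?_
    rw [mul_sum]
    refine sum_le_sum fun σ _ => ?_
    rw [mul_left_comm]
    refine mul_le_mul_of_nonneg_left ?_ (hμ σ)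
    rw [lineE, mul_sum]
    refine sum_le_sum fun j _ => ?_
    rw [mul_left_comm]
    exact mul_le_mul_of_nonneg_left (two_mul_sq_sqrt_sub_le (hf _) (hf _))
      (div_nonneg (hμ _) (sum_nonneg fun _ _ => hμ _))
  rw [mul_left_comm, mul_inv_cancel_left₀ hn'.ne']
  linarith

/-- If `b > 1/2`, no single-site resampling can move: a move would exhibit two spins of
conditional probability at least `b` each. -/
lemma lineE_eq_zero {μ : (V → Fin q) → ℝ} (hμ : ∀ σ, 0 ≤ μ σ) {b : ℝ} (hb : 1 / 2 < b)
    (hmb : MarginallyBounded μ b) (g : (V → Fin q) → ℝ) (v : V) (σ : V → Fin q) :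
    μ σ * lineE μ g v σ = 0 := by
  rcases (hμ σ).eq_or_lt with h0 | h0
  · rw [← h0, zero_mul]
  rw [lineE, sum_eq_zero, mul_zero]
  intro j _
  by_cases hj : j = σ v
  · subst hj; simp
  rcases (hμ (Function.update σ v j)).eq_or_lt with h1 | h1
  · rw [← h1]; simp
  exfalso
  have h2 := line_prob_ge hμ hmb h0 v j h1
  have h3 := line_prob_ge hμ hmb h0 v (σ v) (by rwa [Function.update_eq_self])
  have hp := line_pos hμ h0 v
  have h4 : μ (Function.update σ v j) + μ (Function.update σ v (σ v)) ≤
      ∑ i, μ (Function.update σ v i) := by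
    rw [← sum_pair (f := fun i => μ (Function.update σ v i)) hj]
    exact sum_le_sum_of_subset_of_nonneg (subset_univ _) fun _ _ _ => hμ _
  have h5 := div_le_div_of_nonneg_right h4 hp.le
  rw [add_div, div_self hp.ne'] at h5
  linarith

/-- Multiplied by the percolation weight `(b²/2)^k`, the exponential block constant stays
bounded uniformly in `k ≥ 1`. -/
lemma const_le {b : ℝ} (hb0 : 0 < b) (hb : b ≤ 1 / 2) {k : ℕ} (hk : 1 ≤ k) :
    (5 + 8 * k * Real.log (1 / b)) * (1 / b) ^ (2 * k + 1) * (b ^ 2 / 2) ^ k ≤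
      8 * Real.log (1 / b) / b := by
  have hL : 0.6931471803 < Real.log (1 / b) := by
    refine Real.log_two_gt_d9.trans_le (Real.log_le_log (by norm_num) ?_)
    rw [le_div_iff₀ hb0]; linarith
  set L := Real.log (1 / b)
  have hk2 : (k : ℝ) + 1 ≤ 2 ^ k := by exact_mod_cast (Nat.lt_two_pow_self (n := k))
  have e : (5 + 8 * k * L) * (1 / b) ^ (2 * k + 1) * (b ^ 2 / 2) ^ k =
      (5 + 8 * k * L) / 2 ^ k / b := by
    rw [pow_succ, pow_mul, one_div, inv_pow, div_pow, inv_pow]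
    field_simp
  rw [e]
  refine div_le_div_of_nonneg_right ?_ hb0.le
  rw [div_le_iff₀ (by positivity)]
  have : 8 * L * ((k : ℝ) + 1) ≤ 8 * L * 2 ^ k := by gcongr
  linarith

/-- A log-Sobolev inequality in the nontrivial range `b ≤ 1/2`, with the Dirichlet form of `√f`,
`∑ v, ∑ σ, μ σ * lineE μ √f v σ` up to normalization, on the right. -/
lemma entropy_le_sum_lineE {μ : (V → Fin q) → ℝ} (hμ : ∀ σ, 0 ≤ μ σ) (hμ1 : ∑ σ, μ σ = 1)
    {Δ : ℕ} (hΔ : 3 ≤ Δ) {b η : ℝ} (hb0 : 0 < b) (hb : b ≤ 1 / 2) (hη : 0 < η)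
    (G : SimpleGraph V) [DecidableRel G.Adj] (hdeg : ∀ v : V, G.degree v ≤ Δ)
    (hs : ∀ A B : Finset V, Disjoint A B → (∀ a ∈ A, ∀ b ∈ B, ¬ G.Adj a b) → SwapInv μ A B)
    (htc : TotallyConnected μ) (hmb : MarginallyBounded μ b)
    (hsi : SpectrallyIndependent μ η)
    (hn : (24 * (Δ : ℝ) / b ^ 2) * (4 * η / b ^ 2 + 1) ≤ (Fintype.card V : ℝ))
    {f : (V → Fin q) → ℝ} (hf : ∀ σ, 0 < f σ) :
    entropy μ f ≤ (24 * (Δ : ℝ) / b ^ 2) ^ (4 * η / b ^ 2 + 1) *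
      (8 * Real.log (1 / b) / b * ∑ v, ∑ σ, μ σ * lineE μ (fun σ => √(f σ)) v σ) := by
  have hb1 : b < 1 := by linarith
  have hΔ' : (3 : ℝ) ≤ Δ := by exact_mod_cast hΔ
  have hL : 0 ≤ Real.log (1 / b) := Real.log_nonneg ((one_le_div hb0).2 hb1.le)
  set K := 4 * η / b ^ 2 with hK
  have hK0 : 0 ≤ K := by positivity
  set D : V → ℝ := fun v => ∑ σ, μ σ * lineE μ (fun σ => √(f σ)) v σ with hD
  have hD0 : ∀ v, 0 ≤ D v := fun v =>
    sum_nonneg fun σ _ => mul_nonneg (hμ σ) (lineE_nonneg hμ _ v σ)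
  set C : ℕ → ℝ := fun k => (5 + 8 * k * Real.log (1 / b)) * (1 / b) ^ (2 * k + 1) with hC
  have hC0 : ∀ k, 0 ≤ C k := fun k => by simp only [hC]; positivity
  -- `l = ⌈θ n⌉` vertices are resampled, a fraction small enough for subcritical percolation
  set θ : ℝ := b ^ 2 / (12 * Δ) with hθ
  have hθ0 : 0 < θ := by positivity
  have hθ1 : θ ≤ 1 := by
    rw [hθ, div_le_one (by positivity)]; nlinarith
  have h2θ : 2 / θ = 24 * Δ / b ^ 2 := by rw [hθ]; field_simp; norm_num
  rw [← h2θ] at hn ⊢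
  have hθK : 2 * (K + 1) ≤ θ * Fintype.card V := by
    rw [div_mul_eq_mul_div, div_le_iff₀ hθ0] at hn
    linarith
  have hn0 : (0 : ℝ) < Fintype.card V := by
    by_contra hc
    have : θ * (Fintype.card V : ℝ) ≤ 0 := mul_nonpos_of_nonneg_of_nonpos hθ0.le (not_lt.1 hc)
    linarith
  set l := ⌈θ * (Fintype.card V : ℝ)⌉₊ with hl
  have hl1 : θ * (Fintype.card V : ℝ) ≤ l := Nat.le_ceil _
  have hl2 : l ≤ Fintype.card V := Nat.ceil_le.2 (by nlinarith)
  have hl3 : (l : ℝ) < θ * Fintype.card V + 1 := Nat.ceil_lt_add_one (by positivity)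
  have hl4 : (l : ℝ) / Fintype.card V * (4 * Δ) ≤ b ^ 2 / 2 := by
    have h1 : (l : ℝ) / Fintype.card V ≤ 3 / 2 * θ := by
      rw [div_le_iff₀ hn0]; linarith
    calc (l : ℝ) / Fintype.card V * (4 * Δ) ≤ 3 / 2 * θ * (4 * Δ) := by gcongr
      _ = b ^ 2 / 2 := by rw [hθ]; field_simp; norm_num
  have hM : ∀ k, 1 ≤ k → C k * ((l : ℝ) / Fintype.card V * (4 * Δ)) ^ k ≤
      8 * Real.log (1 / b) / b := fun k hk =>
    le_trans (mul_le_mul_of_nonneg_left (pow_le_pow_left₀ (by positivity) hl4 k) (hC0 k))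
      (const_le hb0 hb hk)
  have hch : (0 : ℝ) < ((Fintype.card V).choose l : ℝ) := by
    exact_mod_cast Nat.choose_pos hl2
  rw [entropy_eq hμ hμ1 hf]
  refine (block_factorization hK0 hθ0
    (fun Λ v => entF_mono hμ hf (subset_insert v Λ))
    (second_diff_ge hμ hb0 hb1 hη hmb hsi hf) hl2 hl1 hθK).trans ?_
  refine mul_le_mul_of_nonneg_left ?_ (by positivity)
  rw [div_le_iff₀ hch]
  calc ∑ S ∈ powersetCard l univ, (entF μ f univ - entF μ f Sᶜ) ≤
        ∑ S ∈ powersetCard l univ, ∑ v ∈ S, C (comp G S v).card * D v :=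
        sum_le_sum fun S _ => entF_comp_le hμ G hs hf C D
          (fun U hU => block_ent_le hμ hb0 hb1 htc hmb hf hU) S
    _ = ∑ v, (∑ S ∈ (powersetCard l univ).filter (fun S => v ∈ S), C (comp G S v).card) * D v := by
        simp only [sum_mul]
        refine sum_comm' fun S v => ?_
        simp [and_comm]
    _ ≤ ∑ v, (8 * Real.log (1 / b) / b * ((Fintype.card V).choose l : ℝ)) * D v :=
        sum_le_sum fun v _ => mul_le_mul_of_nonneg_right
          (sum_comp_le G (by omega) hdeg v hl2 hC0 hM) (hD0 v)
    _ = _ := by rw [← mul_sum]; ring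

end Main

/-- **Optimal modified log-Sobolev inequality for the Glauber dynamics** (main theorem):
if a totally-connected Gibbs distribution of a spin system on a graph of maximum degree at
most `Δ` is `b`-marginally bounded and `η`-spectrally independent, and
`n ≥ (24Δ/b²)·(4η/b²+1)`, then the Glauber dynamics satisfies the modified log-Sobolev
inequality with constant `1/(C₁·n)` where
`C₁ = (18·log(1/b)/b⁴)·(24Δ/b²)^{4η/b²+1}`. -/
theorem glauber_modified_logSobolev
    (Δ : ℕ) (hΔ : 3 ≤ Δ) (b η : ℝ) (hb0 : 0 < b) (hb1 : b < 1) (hη : 0 < η)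
    {V : Type} [Fintype V] [DecidableEq V] {q : ℕ} (hq : 2 ≤ q)
    (G : SimpleGraph V) [DecidableRel G.Adj] (hdeg : ∀ v : V, G.degree v ≤ Δ)
    (A : Fin q → Fin q → ℝ) (hA0 : ∀ i j, 0 ≤ A i j) (hAsymm : ∀ i j, A i j = A j i)
    (h : Fin q → ℝ) (hh : ∀ i, 0 < h i)
    (hZ : 0 < ∑ σ : V → Fin q, gibbsWeight G A hAsymm h σ)
    (μ : (V → Fin q) → ℝ)
    (hμ : ∀ σ, μ σ =
      gibbsWeight G A hAsymm h σ / ∑ σ' : V → Fin q, gibbsWeight G A hAsymm h σ')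
    (htc : TotallyConnected μ) (hmb : MarginallyBounded μ b)
    (hsi : SpectrallyIndependent μ η)
    (hn : (24 * (Δ : ℝ) / b ^ 2) * (4 * η / b ^ 2 + 1) ≤ (Fintype.card V : ℝ)) :
    ∀ f : (V → Fin q) → ℝ, (∀ σ, 0 < f σ) →
      (1 / ((18 * Real.log (1 / b) / b ^ 4 *
          (24 * (Δ : ℝ) / b ^ 2) ^ (4 * η / b ^ 2 + 1)) * (Fintype.card V : ℝ))) *
          entropy μ f ≤
        glauberDirichlet μ f (fun σ => Real.log (f σ)) := by
  intro f hf
  have hμ0 : ∀ σ, 0 ≤ μ σ := fun σ => by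
    rw [hμ]; exact div_nonneg (gibbsWeight_nonneg G A hA0 hAsymm h hh σ) hZ.le
  have hμ1 : ∑ σ, μ σ = 1 := by
    simp only [hμ]; rw [← sum_div, div_self hZ.ne']
  have hΔ' : (3 : ℝ) ≤ Δ := by exact_mod_cast hΔ
  have hL : 0 < Real.log (1 / b) := Real.log_pos ((one_lt_div hb0).2 hb1)
  have hn0 : (0 : ℝ) < Fintype.card V := lt_of_lt_of_le (by positivity) hn
  have hn1 : 0 < Fintype.card V := by exact_mod_cast hn0
  have hdir := sum_lineE_le_dirichlet hμ0 hf hn1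
  set X : ℝ := (24 * (Δ : ℝ) / b ^ 2) ^ (4 * η / b ^ 2 + 1) with hX
  have hX0 : 0 < X := by positivity
  set E := glauberDirichlet μ f (fun σ => Real.log (f σ)) with hE
  have hD0 : 0 ≤ ∑ v, ∑ σ, μ σ * lineE μ (fun σ => √(f σ)) v σ :=
    sum_nonneg fun v _ => sum_nonneg fun σ _ => mul_nonneg (hμ0 σ) (lineE_nonneg hμ0 _ v σ)
  have hE0 : 0 ≤ E := nonneg_of_mul_nonneg_right (hD0.trans hdir) hn0
  rw [one_div_mul_eq_div, div_le_iff₀ (by positivity)]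
  rcases le_or_gt b (1 / 2) with hb | hb
  · have h1 := entropy_le_sum_lineE hμ0 hμ1 hΔ hb0 hb hη G hdeg
      (fun P Q _ hPQ => gibbs_swapInv G A hAsymm h hμ P Q hPQ) htc hmb hsi hn hf
    refine h1.trans ?_
    have h2 : 8 * Real.log (1 / b) / b ≤ 18 * Real.log (1 / b) / b ^ 4 := by
      have : b ^ 4 ≤ b := by
        simpa using pow_le_pow_of_le_one hb0.le hb1.le (show 1 ≤ 4 by norm_num)
      gcongr
      norm_num
    calc _ ≤ X * (18 * Real.log (1 / b) / b ^ 4 * (Fintype.card V * E)) := by gcongr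
      _ = _ := by ring
  -- for `b > 1/2` all jumps have size zero, so one block `U = univ` already gives zero entropy
  · have hU : (univ : Finset V).Nonempty := by
      rw [← card_pos, card_univ]; exact hn1
    have h1 := block_ent_le hμ0 hb0 hb1 htc hmb hf hU
    rw [sum_eq_zero fun v _ => sum_eq_zero fun σ _ => lineE_eq_zero hμ0 hb hmb _ v σ, mul_zero,
      compl_univ, ← entropy_eq hμ0 hμ1 hf] at h1
    exact h1.trans (by positivity)
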